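/- arXiv:2409.09745 — 7 statements merged into one kernel-verified Lean document; each statement's English description precedes it below -/
import Mathlib

section
/- Fix d ≥ 1, T ≥ 1, reals λ₁ ≥ … ≥ λ_d > 0, σ > 0, and positive thresholds w̄^{(1)},…,w̄^{(d)}. Let I = { i ∈ {1,…,d} : λ_i (w̄^{(i)})² ≥ σ²/T }. Consider the Gaussian sequence observation model with parameter w*, and let ŵ be any estimator, i.e., any measurable map of the T observations (and possibly an additional independent source of randomness) into ℝ^d. Then sup over all w* ∈ ℝ^d with |w*^{(i)}| ≤ w̄^{(i)} for every i of the expected excess risk E[ ½ Σ_{i=1}^d λ_i (ŵ^{(i)} − w*^{(i)})² ] is at least (1/8) ( |I| σ²/T + Σ_{i∉I} λ_i (w̄^{(i)})² ). -/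
open MeasureTheory ProbabilityTheory

noncomputable section

/-- The joint law of the `T` observations in the Gaussian sequence observation model:
`X_0, …, X_{T−1}` are i.i.d. random vectors in `ℝ^d` with independent coordinates
`X_t^{(i)} ∼ N(λ_i w^{(i)}, λ_i σ²)`. -/
def obsLaw (d T : ℕ) (lam : Fin d → ℝ) (σ : ℝ) (w : Fin d → ℝ) :
    Measure (Fin T → Fin d → ℝ) :=
  Measure.pi fun _ : Fin T => Measure.pi fun i : Fin d =>
    gaussianReal (lam i * w i) (Real.toNNReal (lam i * σ ^ 2))


theorem lint_fin_prod {n : ℕ} {E : Fin n → Type*}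
    {mE : ∀ i, MeasurableSpace (E i)} {μ : (i : Fin n) → Measure (E i)} [∀ i, SigmaFinite (μ i)]
    (f : (i : Fin n) → E i → ENNReal) (hf : ∀ i, Measurable (f i)) :
    ∫⁻ x : (i : Fin n) → E i, ∏ i, f i (x i) ∂(Measure.pi μ) = ∏ i, ∫⁻ x, f i x ∂(μ i) := by
  induction n with
  | zero => simp
  | succ n n_ih =>
      calc
        _ = ∫⁻ x : E 0 × ((i : Fin n) → E (Fin.succ i)),
            f 0 x.1 * ∏ i : Fin n, f (Fin.succ i) (x.2 i)
            ∂((μ 0).prod (Measure.pi (fun i ↦ μ i.succ))) := by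
          rw [← ((measurePreserving_piFinSuccAbove μ 0).symm).lintegral_comp_emb
            (MeasurableEquiv.measurableEmbedding _)]
          apply lintegral_congr
          intro x
          rw [Fin.prod_univ_succ]
          rfl
        _ = (∫⁻ x, f 0 x ∂μ 0)
            * ∏ i : Fin n, ∫⁻ (x : E (Fin.succ i)), f (Fin.succ i) x ∂(μ i.succ) := by
          rw [← n_ih _ (fun i => hf _), ← lintegral_prod_mul (hf 0).aemeasurable]
          exact (Finset.measurable_prod _ (fun i _ =>
            (hf _).comp (measurable_pi_apply i))).aemeasurable
        _ = ∏ i, ∫⁻ x, f i x ∂(μ i) := by rw [Fin.prod_univ_succ]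

theorem pi_wd {n : ℕ} {E : Fin n → Type*}
    {mE : ∀ i, MeasurableSpace (E i)} {μ : (i : Fin n) → Measure (E i)} [∀ i, SigmaFinite (μ i)]
    (f : (i : Fin n) → E i → ENNReal) (hf : ∀ i, Measurable (f i))
    [∀ i, SigmaFinite ((μ i).withDensity (f i))] :
    Measure.pi (fun i => (μ i).withDensity (f i))
      = (Measure.pi μ).withDensity (fun x => ∏ i, f i (x i)) := by
  apply Measure.pi_eq
  intro s hs
  rw [withDensity_apply _ (MeasurableSet.univ_pi hs), ← lintegral_indicator (MeasurableSet.univ_pi hs)]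
  have h : ∀ i, (μ i).withDensity (f i) (s i) = ∫⁻ x, (s i).indicator (f i) x ∂(μ i) := by
    intro i
    rw [withDensity_apply _ (hs i), lintegral_indicator (hs i)]
  simp_rw [h]
  rw [← lint_fin_prod _ (fun i => (hf i).indicator (hs i))]
  apply lintegral_congr
  intro x
  by_cases hx : x ∈ Set.univ.pi s
  · rw [Set.indicator_of_mem hx]
    refine Finset.prod_congr rfl fun i _ => ?_
    rw [Set.indicator_of_mem (hx i (Set.mem_univ i))]
  · rw [Set.indicator_of_notMem hx]
    simp only [Set.mem_pi, Set.mem_univ, true_imp_iff, not_forall] at hx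
    obtain ⟨i, hi⟩ := hx
    symm
    apply Finset.prod_eq_zero (Finset.mem_univ i)
    rw [Set.indicator_of_notMem hi]

/-- density of the observation law -/
def obsDens (d T : ℕ) (lam : Fin d → ℝ) (σ : ℝ) (w : Fin d → ℝ) (x : Fin T → Fin d → ℝ) : ℝ :=
  ∏ t, ∏ i, gaussianPDFReal (lam i * w i) (Real.toNNReal (lam i * σ ^ 2)) (x t i)

theorem obsDens_meas (d T : ℕ) (lam : Fin d → ℝ) (σ : ℝ) (w : Fin d → ℝ) :
    Measurable (obsDens d T lam σ w) := by
  unfold obsDens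
  refine Finset.measurable_prod _ fun t _ => Finset.measurable_prod _ fun i _ => ?_
  exact (measurable_gaussianPDFReal _ _).comp
    ((measurable_pi_apply i).comp (measurable_pi_apply t))

theorem obsDens_nonneg (d T : ℕ) (lam : Fin d → ℝ) (σ : ℝ) (w : Fin d → ℝ)
    (x : Fin T → Fin d → ℝ) : 0 ≤ obsDens d T lam σ w x :=
  Finset.prod_nonneg fun _ _ => Finset.prod_nonneg fun _ _ => gaussianPDFReal_nonneg _ _ _

theorem obsLaw_eq (d T : ℕ) (lam : Fin d → ℝ) (hlam : ∀ i, 0 < lam i) (σ : ℝ) (hσ : 0 < σ)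
    (w : Fin d → ℝ) :
    obsLaw d T lam σ w = (volume : Measure (Fin T → Fin d → ℝ)).withDensity
      (fun x => ENNReal.ofReal (obsDens d T lam σ w x)) := by
  have hv : ∀ i, Real.toNNReal (lam i * σ ^ 2) ≠ 0 := by
    intro i
    have := hlam i
    have h : 0 < Real.toNNReal (lam i * σ ^ 2) := Real.toNNReal_pos.2 (by positivity)
    exact h.ne'
  have h0 : ∀ i, gaussianReal (lam i * w i) (Real.toNNReal (lam i * σ ^ 2))
      = (volume : Measure ℝ).withDensity
        (gaussianPDF (lam i * w i) (Real.toNNReal (lam i * σ ^ 2))) :=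
    fun i => gaussianReal_of_var_ne_zero _ (hv i)
  have hs : ∀ i, SigmaFinite ((volume : Measure ℝ).withDensity
        (gaussianPDF (lam i * w i) (Real.toNNReal (lam i * σ ^ 2)))) := by
    intro i
    rw [← h0]; infer_instance
  have h1 : Measure.pi (fun i : Fin d =>
      gaussianReal (lam i * w i) (Real.toNNReal (lam i * σ ^ 2)))
      = (volume : Measure (Fin d → ℝ)).withDensity (fun x => ∏ i,
        gaussianPDF (lam i * w i) (Real.toNNReal (lam i * σ ^ 2)) (x i)) := by
    simp_rw [h0]
    rw [pi_wd _ (fun i => measurable_gaussianPDF _ _)]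
    rfl
  have hs1 : SigmaFinite ((volume : Measure (Fin d → ℝ)).withDensity (fun x => ∏ i,
        gaussianPDF (lam i * w i) (Real.toNNReal (lam i * σ ^ 2)) (x i))) := by
    rw [← h1]; infer_instance
  unfold obsLaw
  simp_rw [h1]
  rw [pi_wd (fun (_ : Fin T) (x : Fin d → ℝ) => ∏ i,
        gaussianPDF (lam i * w i) (Real.toNNReal (lam i * σ ^ 2)) (x i))
      (fun t => Finset.measurable_prod _ fun i _ =>
        (measurable_gaussianPDF _ _).comp (measurable_pi_apply i))]
  have : (Measure.pi fun _ : Fin T => (volume : Measure (Fin d → ℝ))) = volume := rfl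
  rw [this]
  congr 1
  funext x
  unfold obsDens
  rw [ENNReal.ofReal_prod_of_nonneg
    (fun _ _ => Finset.prod_nonneg fun _ _ => gaussianPDFReal_nonneg _ _ _)]
  refine Finset.prod_congr rfl fun t _ => ?_
  rw [ENNReal.ofReal_prod_of_nonneg (fun _ _ => gaussianPDFReal_nonneg _ _ _)]
  rfl

theorem gauss_mul (l s a x : ℝ) (hl : 0 < l) (hs : 0 < s) :
    gaussianPDFReal (l * a) (Real.toNNReal (l * s ^ 2)) x
      * gaussianPDFReal (l * (-a)) (Real.toNNReal (l * s ^ 2)) x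
    = gaussianPDFReal (l * 0) (Real.toNNReal (l * s ^ 2)) x ^ 2
      * Real.exp (-(l * a ^ 2 / s ^ 2)) := by
  have hv : ((Real.toNNReal (l * s ^ 2) : NNReal) : ℝ) = l * s ^ 2 :=
    Real.coe_toNNReal _ (by positivity)
  simp only [gaussianPDFReal, hv]
  rw [mul_mul_mul_comm, ← Real.exp_add, mul_pow, ← Real.exp_nat_mul, mul_assoc (_ ^ 2),
    ← Real.exp_add, ← sq]
  congr 2
  field_simp
  push_cast
  ring

theorem obsDens_mul (d T : ℕ) (hT : 0 < T) (lam : Fin d → ℝ) (hlam : ∀ i, 0 < lam i) (σ : ℝ)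
    (hσ : 0 < σ) (w : Fin d → ℝ) (i : Fin d) (a : ℝ) (ha : T * (lam i * a ^ 2) ≤ σ ^ 2)
    (x : Fin T → Fin d → ℝ) :
    obsDens d T lam σ (Function.update w i 0) x ^ 2 / 4 ≤
      obsDens d T lam σ (Function.update w i a) x
      * obsDens d T lam σ (Function.update w i (-a)) x := by
  have h : obsDens d T lam σ (Function.update w i a) x
      * obsDens d T lam σ (Function.update w i (-a)) x
      = obsDens d T lam σ (Function.update w i 0) x ^ 2 *
        ∏ _t : Fin T, Real.exp (-(lam i * a ^ 2 / σ ^ 2)) := by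
    unfold obsDens
    rw [← Finset.prod_mul_distrib, ← Finset.prod_pow, ← Finset.prod_mul_distrib]
    refine Finset.prod_congr rfl fun t _ => ?_
    rw [← Finset.prod_mul_distrib, ← Finset.prod_pow, ← Finset.mul_prod_erase _ _ (Finset.mem_univ i),
      ← Finset.mul_prod_erase _ (fun j => gaussianPDFReal (lam j * Function.update w i 0 j) _ _ ^ 2)
        (Finset.mem_univ i)]
    simp only [Function.update_self]
    rw [gauss_mul _ _ _ _ (hlam i) hσ]
    have : ∀ b : ℝ, ∀ j ∈ Finset.univ.erase i, Function.update w i b j = w j := by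
      intro b j hj
      exact Function.update_of_ne (Finset.ne_of_mem_erase hj) _ _
    rw [mul_right_comm]
    congr 2
    refine Finset.prod_congr rfl fun j hj => ?_
    rw [this _ _ hj, this _ _ hj, this _ _ hj, ← sq]
  rw [h, Finset.prod_const, ← Real.exp_nat_mul, div_eq_mul_inv]
  refine mul_le_mul_of_nonneg_left ?_ (sq_nonneg _)
  have h1 : (-1 : ℝ) ≤ ((Finset.univ : Finset (Fin T)).card : ℝ) * -(lam i * a ^ 2 / σ ^ 2) := by
    rw [Finset.card_univ, Fintype.card_fin]
    have : (T : ℝ) * (lam i * a ^ 2) / σ ^ 2 ≤ 1 := (div_le_one (by positivity)).2 ha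
    rw [mul_div_assoc] at this
    linarith
  refine le_trans ?_ (Real.exp_le_exp.2 h1)
  rw [Real.exp_neg]
  apply inv_anti₀ (Real.exp_pos _)
  linarith [Real.exp_one_lt_d9]

theorem ptwise (p q m a y : ℝ) (hp : 0 ≤ p) (hq : 0 ≤ q) (hm : 0 ≤ m) (h : m ^ 2 / 4 ≤ p * q) :
    a ^ 2 * m ≤ p * (y - a) ^ 2 + q * (y - -a) ^ 2 + a ^ 2 / 4 * p + a ^ 2 / 4 * q := by
  rcases eq_or_lt_of_le (add_nonneg hp hq) with h0 | h0
  · have hp0 : p = 0 := by linarith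
    have hq0 : q = 0 := by linarith
    subst hp0 hq0
    have : m = 0 := by nlinarith
    simp [this]
  · have e : (p + q) * (p * (y - a) ^ 2 + q * (y - -a) ^ 2 + a ^ 2 / 4 * p + a ^ 2 / 4 * q
        - a ^ 2 * m) = ((p + q) * y + (q - p) * a) ^ 2 + 4 * a ^ 2 * (p * q - m ^ 2 / 4)
          + a ^ 2 * ((p + q) / 2 - m) ^ 2 := by ring
    have : 0 ≤ (p + q) * (p * (y - a) ^ 2 + q * (y - -a) ^ 2 + a ^ 2 / 4 * p + a ^ 2 / 4 * q
        - a ^ 2 * m) := by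
      rw [e]
      have := sub_nonneg.2 h
      positivity
    linarith [nonneg_of_mul_nonneg_right this h0]

instance obsLaw_prob (d T : ℕ) (lam : Fin d → ℝ) (σ : ℝ) (w : Fin d → ℝ) :
    IsProbabilityMeasure (obsLaw d T lam σ w) := by
  unfold obsLaw; infer_instance

theorem lint_obs (d T : ℕ) (lam : Fin d → ℝ) (hlam : ∀ i, 0 < lam i) (σ : ℝ) (hσ : 0 < σ)
    (w : Fin d → ℝ) (Ω' : Type) [MeasurableSpace Ω'] (ν : Measure Ω') [IsProbabilityMeasure ν]
    (f : (Fin T → Fin d → ℝ) × Ω' → ENNReal) (hf : Measurable f) :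
    ∫⁻ p, f p ∂((obsLaw d T lam σ w).prod ν)
      = ∫⁻ p, ENNReal.ofReal (obsDens d T lam σ w p.1) * f p
        ∂((volume : Measure (Fin T → Fin d → ℝ)).prod ν) := by
  have hm := (obsDens_meas d T lam σ w).ennreal_ofReal
  have hs : SigmaFinite ((volume : Measure (Fin T → Fin d → ℝ)).withDensity
      (fun x => ENNReal.ofReal (obsDens d T lam σ w x))) := by
    rw [← obsLaw_eq d T lam hlam σ hσ w]; infer_instance
  rw [obsLaw_eq d T lam hlam σ hσ w, prod_withDensity_left hm]
  exact lintegral_withDensity_eq_lintegral_mul _ (hm.comp measurable_fst) hf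

/-- coordinate risk -/
def crisk (d T : ℕ) (lam : Fin d → ℝ) (σ : ℝ) (Ω' : Type) [MeasurableSpace Ω'] (ν : Measure Ω')
    (what : (Fin T → Fin d → ℝ) × Ω' → Fin d → ℝ) (i : Fin d) (w : Fin d → ℝ) : ENNReal :=
  ∫⁻ p, ENNReal.ofReal ((what p i - w i) ^ 2) ∂((obsLaw d T lam σ w).prod ν)

theorem two_point (d T : ℕ) (hT : 0 < T) (lam : Fin d → ℝ) (hlam : ∀ i, 0 < lam i) (σ : ℝ)
    (hσ : 0 < σ) (Ω' : Type) [MeasurableSpace Ω'] (ν : Measure Ω') [IsProbabilityMeasure ν]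
    (what : (Fin T → Fin d → ℝ) × Ω' → Fin d → ℝ) (hmeas : Measurable what)
    (w : Fin d → ℝ) (i : Fin d) (a : ℝ) (ha : T * (lam i * a ^ 2) ≤ σ ^ 2) :
    ENNReal.ofReal (a ^ 2 / 2) ≤
      crisk d T lam σ Ω' ν what i (Function.update w i a)
      + crisk d T lam σ Ω' ν what i (Function.update w i (-a)) := by
  have hw : Measurable fun p => what p i := (measurable_pi_apply i).comp hmeas
  have hd : ∀ b : ℝ, Measurable fun p : (Fin T → Fin d → ℝ) × Ω' =>
      ENNReal.ofReal (obsDens d T lam σ (Function.update w i b) p.1) := fun b =>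
    ((obsDens_meas d T lam σ _).comp measurable_fst).ennreal_ofReal
  have hr : ∀ b : ℝ, Measurable fun p => ENNReal.ofReal ((what p i - b) ^ 2) := fun b =>
    ((hw.sub_const b).pow_const 2).ennreal_ofReal
  have hcr : ∀ b : ℝ, crisk d T lam σ Ω' ν what i (Function.update w i b)
      = ∫⁻ p, ENNReal.ofReal (obsDens d T lam σ (Function.update w i b) p.1)
          * ENNReal.ofReal ((what p i - b) ^ 2)
        ∂((volume : Measure (Fin T → Fin d → ℝ)).prod ν) := by
    intro b
    unfold crisk
    simp only [Function.update_self]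
    exact lint_obs d T lam hlam σ hσ _ Ω' ν _ (hr b)
  have hone : ∀ b c : ℝ, ∫⁻ p, ENNReal.ofReal c *
        ENNReal.ofReal (obsDens d T lam σ (Function.update w i b) p.1)
        ∂((volume : Measure (Fin T → Fin d → ℝ)).prod ν) = ENNReal.ofReal c := by
    intro b c
    have := lint_obs d T lam hlam σ hσ (Function.update w i b) Ω' ν (fun _ => ENNReal.ofReal c)
      measurable_const
    simp only [lintegral_const, measure_univ, mul_one] at this
    exact (lintegral_congr fun p => mul_comm _ _).trans this.symm
  have main : ENNReal.ofReal (a ^ 2) ≤ (crisk d T lam σ Ω' ν what i (Function.update w i a)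
      + crisk d T lam σ Ω' ν what i (Function.update w i (-a)))
      + ENNReal.ofReal (a ^ 2 / 4) + ENNReal.ofReal (a ^ 2 / 4) := by
    have hmr : Measurable fun p => ENNReal.ofReal (obsDens d T lam σ (Function.update w i a) p.1)
          * ENNReal.ofReal ((what p i - a) ^ 2) := (hd a).mul (hr a)
    refine le_of_eq_of_le (hone 0 (a ^ 2)).symm (le_of_le_of_eq ?_ (congrArg₂ (· + ·)
      (congrArg₂ (· + ·) (congrArg₂ (· + ·) (hcr a) (hcr (-a))).symm
        (hone a (a ^ 2 / 4))) (hone (-a) (a ^ 2 / 4))))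
    rw [← lintegral_add_left hmr,
      ← lintegral_add_right _ ((hd a).const_mul _),
      ← lintegral_add_right _ ((hd (-a)).const_mul _)]
    refine lintegral_mono fun p => ?_
    have n := fun b => obsDens_nonneg d T lam σ (Function.update w i b) p.1
    have k := ptwise _ _ _ a (what p i) (n a) (n (-a)) (n 0)
      (obsDens_mul d T hT lam hlam σ hσ w i a ha p.1)
    have n1 := n a
    have n2 := n (-a)
    simp only []
    rw [← ENNReal.ofReal_mul (by positivity), ← ENNReal.ofReal_mul (by positivity),
      ← ENNReal.ofReal_mul (by positivity), ← ENNReal.ofReal_mul (by positivity),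
      ← ENNReal.ofReal_mul (by positivity), ← ENNReal.ofReal_add (by positivity) (by positivity),
      ← ENNReal.ofReal_add (by positivity) (by positivity),
      ← ENNReal.ofReal_add (by positivity) (by positivity)]
    exact ENNReal.ofReal_le_ofReal k
  rw [add_assoc, ← ENNReal.ofReal_add (by positivity) (by positivity)] at main
  have e : a ^ 2 = a ^ 2 / 2 + (a ^ 2 / 4 + a ^ 2 / 4) := by ring
  have e2 : ENNReal.ofReal (a ^ 2) = ENNReal.ofReal (a ^ 2 / 2)
      + ENNReal.ofReal (a ^ 2 / 4 + a ^ 2 / 4) := by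
    rw [← ENNReal.ofReal_add (by positivity) (by positivity), ← e]
  rw [e2] at main
  exact (ENNReal.add_le_add_iff_right ENNReal.ofReal_ne_top).1 main

/-- sign vector parameters -/
def sgnv {d : ℕ} (a : Fin d → ℝ) (ε : Fin d → Bool) (i : Fin d) : ℝ := if ε i then a i else - a i

/-- flip one sign -/
def flipb {d : ℕ} (i : Fin d) (ε : Fin d → Bool) : Fin d → Bool := Function.update ε i (!ε i)

theorem flipb_inv {d : ℕ} (i : Fin d) : Function.Involutive (flipb i) := by
  intro ε
  simp [flipb]

theorem pair (d T : ℕ) (hT : 0 < T) (lam : Fin d → ℝ) (hlam : ∀ i, 0 < lam i) (σ : ℝ)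
    (hσ : 0 < σ) (Ω' : Type) [MeasurableSpace Ω'] (ν : Measure Ω') [IsProbabilityMeasure ν]
    (what : (Fin T → Fin d → ℝ) × Ω' → Fin d → ℝ) (hmeas : Measurable what)
    (a : Fin d → ℝ) (i : Fin d) (ha : T * (lam i * a i ^ 2) ≤ σ ^ 2) :
    (Fintype.card (Fin d → Bool) : ENNReal) * ENNReal.ofReal (a i ^ 2 / 2) ≤
      2 * ∑ ε, crisk d T lam σ Ω' ν what i (sgnv a ε) := by
  have h : ∑ ε, crisk d T lam σ Ω' ν what i (sgnv a (flipb i ε))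
      = ∑ ε, crisk d T lam σ Ω' ν what i (sgnv a ε) :=
    Equiv.sum_comp (flipb_inv i).toPerm (fun ε => crisk d T lam σ Ω' ν what i (sgnv a ε))
  rw [two_mul]
  nth_rw 2 [← h]
  rw [← Finset.sum_add_distrib, ← Finset.card_univ, ← nsmul_eq_mul]
  refine Finset.card_nsmul_le_sum _ _ _ fun ε _ => ?_
  have key : ∀ b : ℝ, b = sgnv a ε i → T * (lam i * b ^ 2) ≤ σ ^ 2 →
      ENNReal.ofReal (b ^ 2 / 2) ≤ crisk d T lam σ Ω' ν what i (sgnv a ε)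
        + crisk d T lam σ Ω' ν what i (sgnv a (flipb i ε)) := by
    intro b hb hb2
    have t := two_point d T hT lam hlam σ hσ Ω' ν what hmeas (sgnv a ε) i b hb2
    have e1 : Function.update (sgnv a ε) i b = sgnv a ε := by rw [hb, Function.update_eq_self]
    have e2 : Function.update (sgnv a ε) i (-b) = sgnv a (flipb i ε) := by
      funext j
      by_cases hj : j = i
      · subst hj
        rw [Function.update_self, hb]
        unfold sgnv flipb
        cases ε j <;> simp
      · rw [Function.update_of_ne hj]
        simp [sgnv, flipb, Function.update_of_ne hj]
    rwa [e1, e2] at t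
  have hsq : sgnv a ε i ^ 2 = a i ^ 2 := by
    unfold sgnv; split_ifs <;> ring
  have := key (sgnv a ε i) rfl (by rw [hsq]; exact ha)
  rwa [hsq] at this

theorem risk_eq (d T : ℕ) (lam : Fin d → ℝ) (hlam : ∀ i, 0 < lam i) (σ : ℝ)
    (Ω' : Type) [MeasurableSpace Ω'] (ν : Measure Ω')
    (what : (Fin T → Fin d → ℝ) × Ω' → Fin d → ℝ) (hmeas : Measurable what) (w : Fin d → ℝ) :
    ∫⁻ p, ENNReal.ofReal ((1 / 2) * ∑ i : Fin d, lam i * (what p i - w i) ^ 2)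
          ∂((obsLaw d T lam σ w).prod ν)
      = ∑ i, ENNReal.ofReal (lam i / 2) * crisk d T lam σ Ω' ν what i w := by
  have hr : ∀ i, Measurable fun p => ENNReal.ofReal ((what p i - w i) ^ 2) := fun i =>
    ((((measurable_pi_apply i).comp hmeas).sub_const (w i)).pow_const 2).ennreal_ofReal
  unfold crisk
  simp_rw [← lintegral_const_mul _ (hr _)]
  rw [← lintegral_finsetSum _ (fun i _ => (hr i).const_mul _)]
  refine lintegral_congr fun p => ?_
  rw [Finset.mul_sum, ENNReal.ofReal_sum_of_nonneg]
  · refine Finset.sum_congr rfl fun i _ => ?_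
    have := hlam i
    rw [← ENNReal.ofReal_mul (by positivity)]
    congr 1; ring
  · intro i _
    have := hlam i
    positivity

/-- Information-theoretic lower bound (Theorem 4.3 of the paper): for any estimator
(built from the `T` observations and an independent source of randomness), the supremum
of the expected excess risk over `{w* : |w*^{(i)}| ≤ w̄^{(i)} ∀i}` is at least
`(1/8)(|I|σ²/T + Σ_{i∉I} λ_i (w̄^{(i)})²)`, where
`I = {i : λ_i (w̄^{(i)})² ≥ σ²/T}`. -/
theorem minmax_lower_bound
    (d T : ℕ) (hd : 0 < d) (hT : 0 < T)
    (lam : Fin d → ℝ) (hlam : ∀ i, 0 < lam i)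
    (hmono : ∀ i j : Fin d, i ≤ j → lam j ≤ lam i)
    (σ : ℝ) (hσ : 0 < σ)
    (wbar : Fin d → ℝ) (hwbar : ∀ i, 0 < wbar i)
    -- the estimator: a measurable map of the observations and independent randomness
    (Ω' : Type) (_ : MeasurableSpace Ω') (ν : Measure Ω') (_ : IsProbabilityMeasure ν)
    (what : (Fin T → Fin d → ℝ) × Ω' → Fin d → ℝ) (hmeas : Measurable what) :
    ENNReal.ofReal ((1 / 8) *
        (((Finset.univ.filter fun i : Fin d =>
            σ ^ 2 / T ≤ lam i * (wbar i) ^ 2).card : ℝ) * σ ^ 2 / T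
          + ∑ i ∈ Finset.univ.filter
              (fun i : Fin d => ¬ (σ ^ 2 / T ≤ lam i * (wbar i) ^ 2)),
            lam i * (wbar i) ^ 2)) ≤
      ⨆ wstar ∈ {w : Fin d → ℝ | ∀ i, |w i| ≤ wbar i},
        ∫⁻ p, ENNReal.ofReal
            ((1 / 2) * ∑ i : Fin d, lam i * (what p i - wstar i) ^ 2)
          ∂((obsLaw d T lam σ wstar).prod ν) := by
  set B := ⨆ wstar ∈ {w : Fin d → ℝ | ∀ i, |w i| ≤ wbar i},
        ∫⁻ p, ENNReal.ofReal
            ((1 / 2) * ∑ i : Fin d, lam i * (what p i - wstar i) ^ 2)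
          ∂((obsLaw d T lam σ wstar).prod ν) with hB
  have hT' : (0 : ℝ) < T := by exact_mod_cast hT
  let a : Fin d → ℝ := fun i =>
    if σ ^ 2 / T ≤ lam i * (wbar i) ^ 2 then Real.sqrt (σ ^ 2 / T / lam i) else wbar i
  have ha2 : ∀ i, lam i * a i ^ 2 =
      if σ ^ 2 / T ≤ lam i * (wbar i) ^ 2 then σ ^ 2 / T else lam i * wbar i ^ 2 := by
    intro i
    have := hlam i
    simp only [a]
    split_ifs with h
    · rw [Real.sq_sqrt (by positivity)]
      field_simp
    · rfl
  have ha0 : ∀ i, 0 ≤ a i := by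
    intro i
    simp only [a]
    split_ifs
    · exact Real.sqrt_nonneg _
    · exact (hwbar i).le
  have haw : ∀ i, a i ≤ wbar i := by
    intro i
    simp only [a]
    split_ifs with h
    · apply Real.sqrt_le_iff.2 ⟨(hwbar i).le, ?_⟩
      rw [div_le_iff₀ (hlam i)]
      linarith
    · exact le_rfl
  have haT : ∀ i, T * (lam i * a i ^ 2) ≤ σ ^ 2 := by
    intro i
    have : lam i * a i ^ 2 ≤ σ ^ 2 / T := by
      rw [ha2]
      split_ifs with h
      · exact le_rfl
      · exact (not_le.1 h).le
    rw [le_div_iff₀ hT'] at this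
    linarith
  have hle : ∀ ε : Fin d → Bool,
      ∑ i, ENNReal.ofReal (lam i / 2) * crisk d T lam σ Ω' ν what i (sgnv a ε) ≤ B := by
    intro ε
    rw [← risk_eq d T lam hlam σ Ω' ν what hmeas]
    refine le_iSup₂_of_le (sgnv a ε) ?_ le_rfl
    intro i
    have : |sgnv a ε i| = a i := by
      unfold sgnv
      split_ifs
      · exact abs_of_nonneg (ha0 i)
      · rw [abs_neg]; exact abs_of_nonneg (ha0 i)
    rw [this]
    exact haw i
  have hsum : ∑ ε : Fin d → Bool,
      ∑ i, ENNReal.ofReal (lam i / 2) * crisk d T lam σ Ω' ν what i (sgnv a ε)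
      ≤ (Fintype.card (Fin d → Bool) : ENNReal) * B := by
    rw [← Finset.card_univ, ← nsmul_eq_mul]
    exact Finset.sum_le_card_nsmul _ _ _ fun ε _ => hle ε
  rw [Finset.sum_comm] at hsum
  simp_rw [← Finset.mul_sum] at hsum
  have hS : (1 / 8) *
        (((Finset.univ.filter fun i : Fin d =>
            σ ^ 2 / T ≤ lam i * (wbar i) ^ 2).card : ℝ) * σ ^ 2 / T
          + ∑ i ∈ Finset.univ.filter
              (fun i : Fin d => ¬ (σ ^ 2 / T ≤ lam i * (wbar i) ^ 2)),
            lam i * (wbar i) ^ 2) = ∑ i, lam i / 2 * (a i ^ 2 / 2) / 2 := by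
    have : ∀ i, lam i / 2 * (a i ^ 2 / 2) / 2 = 1 / 8 * (lam i * a i ^ 2) := fun i => by ring
    simp_rw [this]
    rw [← Finset.mul_sum]
    simp_rw [ha2]
    rw [Finset.sum_ite, Finset.sum_const, nsmul_eq_mul, mul_div_assoc]
  rw [hS]
  have hcard0 : ((Fintype.card (Fin d → Bool) : ENNReal)) ≠ 0 := by
    exact_mod_cast Fintype.card_ne_zero
  have hcardT : ((Fintype.card (Fin d → Bool) : ENNReal)) ≠ ⊤ := ENNReal.natCast_ne_top _
  have hnn : ∀ i, 0 ≤ lam i / 2 * (a i ^ 2 / 2) / 2 := by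
    intro i
    have := hlam i
    positivity
  have fin2 : 2 * ((Fintype.card (Fin d → Bool) : ENNReal)
      * ENNReal.ofReal (∑ i, lam i / 2 * (a i ^ 2 / 2) / 2))
      ≤ 2 * ((Fintype.card (Fin d → Bool) : ENNReal) * B) := by
    refine le_trans ?_ (mul_le_mul_right hsum 2)
    rw [ENNReal.ofReal_sum_of_nonneg (fun i _ => hnn i), Finset.mul_sum, Finset.mul_sum,
      Finset.mul_sum]
    refine Finset.sum_le_sum fun i _ => ?_
    have hp := pair d T hT lam hlam σ hσ Ω' ν what hmeas a i (haT i)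
    have hl := hlam i
    calc _ = ENNReal.ofReal (lam i / 2) * ((Fintype.card (Fin d → Bool) : ENNReal)
              * ENNReal.ofReal (a i ^ 2 / 2)) := by
            rw [mul_left_comm, mul_left_comm (ENNReal.ofReal (lam i / 2)),
              ← ENNReal.ofReal_mul (by positivity)]
            congr 1
            rw [← ENNReal.ofReal_ofNat 2, ← ENNReal.ofReal_mul (by positivity)]
            congr 1
            ring
      _ ≤ ENNReal.ofReal (lam i / 2)
            * (2 * ∑ ε, crisk d T lam σ Ω' ν what i (sgnv a ε)) := by gcongr
      _ = _ := by rw [mul_left_comm]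
  rw [ENNReal.mul_le_mul_iff_right (by simp) (by simp),
    ENNReal.mul_le_mul_iff_right hcard0 hcardT] at fin2
  exact fin2
end
end

section
/- Let a, b > 1 and c₁, c₂ > 0, and suppose c₁ i^{−a} ≤ λ_i ≤ c₂ i^{−a} for all 1 ≤ i ≤ d. Set w̄^{(i)} = i^{(a−b)/2} for each i. Then there is a constant c > 0 depending only on c₁ and b such that whenever d ≥ (c₁ T/σ²)^{1/b} ≥ 1, for every estimator ŵ (any measurable map of the T observations of the Gaussian sequence observation model, and possibly an additional independent source of randomness, into ℝ^d), sup over all w* with |w*^{(i)}| ≤ i^{(a−b)/2} for every i of the expected excess risk E[ ½ Σ_{i=1}^d λ_i (ŵ^{(i)} − w*^{(i)})² ] is at least c · T^{−1 + 1/b} · σ^{2 − 2/b}. -/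
open MeasureTheory ProbabilityTheory

noncomputable section

theorem aux_pi_withDensity {ι : Type*} [Fintype ι] {α : ι → Type*} [∀ i, MeasurableSpace (α i)]
    (μ : ∀ i, Measure (α i)) [∀ i, IsProbabilityMeasure (μ i)]
    (f : ∀ i, α i → ENNReal) (hf : ∀ i, Measurable (f i))
    (hp : ∀ i, IsProbabilityMeasure ((μ i).withDensity (f i))) :
    Measure.pi (fun i => (μ i).withDensity (f i)) =
      (Measure.pi μ).withDensity (fun x => ∏ i, f i (x i)) := by
  refine Measure.pi_eq ?_
  intro s hs
  rw [withDensity_apply _ (MeasurableSet.univ_pi hs), ← lintegral_indicator (MeasurableSet.univ_pi hs)]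
  have h1 : ∀ x : ∀ i, α i, (Set.univ.pi s).indicator (fun x => ∏ i, f i (x i)) x =
      ∏ i, (s i).indicator (f i) (x i) := by
    intro x
    by_cases hx : x ∈ Set.univ.pi s
    · rw [Set.indicator_of_mem hx]
      exact Finset.prod_congr rfl fun i _ => (Set.indicator_of_mem (hx i trivial) _).symm
    · rw [Set.indicator_of_notMem hx]
      simp only [Set.mem_pi, Set.mem_univ, true_imp_iff, not_forall] at hx
      obtain ⟨i, hi⟩ := hx
      exact (Finset.prod_eq_zero (Finset.mem_univ i) (Set.indicator_of_notMem hi _)).symm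
  simp_rw [h1]
  have hm : ∀ i, Measurable ((s i).indicator (f i)) := fun i => (hf i).indicator (hs i)
  have h2 := lintegral_prod_eq_prod_lintegral_of_indepFun (μ := Measure.pi μ) Finset.univ
    (fun i (x : ∀ i, α i) => (s i).indicator (f i) (x i))
    (iIndepFun_pi (fun i => (hm i).aemeasurable)) (fun i => (hm i).comp (measurable_pi_apply i))
  rw [h2]
  refine Finset.prod_congr rfl fun i _ => ?_
  rw [withDensity_apply _ (hs i), ← lintegral_indicator (hs i)]
  exact (measurePreserving_eval μ i).lintegral_comp (hm i)

theorem aux_gauss (l σ : ℝ) (hl : 0 < l) (hσ : 0 < σ) (u w : ℝ) :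
    gaussianReal (l * w) (Real.toNNReal (l * σ ^ 2)) =
      (gaussianReal (l * u) (Real.toNNReal (l * σ ^ 2))).withDensity
        (fun x => ENNReal.ofReal (Real.exp (x * (w - u) / σ ^ 2 - l * (w ^ 2 - u ^ 2) / (2 * σ ^ 2)))) := by
  have hv : Real.toNNReal (l * σ ^ 2) ≠ 0 := by
    have : 0 < l * σ ^ 2 := by positivity
    simpa using this
  rw [gaussianReal_of_var_ne_zero _ hv, gaussianReal_of_var_ne_zero _ hv,
    ← withDensity_mul _ (measurable_gaussianPDF _ _) (by fun_prop)]
  congr 1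
  ext x
  simp only [Pi.mul_apply, gaussianPDF, gaussianPDFReal]
  rw [← ENNReal.ofReal_mul (by positivity), mul_assoc _ (Real.exp _) (Real.exp _), ← Real.exp_add,
    Real.coe_toNNReal _ (by positivity)]
  congr 3
  field_simp
  ring

instance aux_inst (d T : ℕ) (lam : Fin d → ℝ) (σ : ℝ) (w : Fin d → ℝ) :
    IsProbabilityMeasure (obsLaw d T lam σ w) := by
  unfold obsLaw; infer_instance

theorem aux_obsLaw (d T : ℕ) (lam : Fin d → ℝ) (σ : ℝ) (hσ : 0 < σ) (hl : ∀ i, 0 < lam i)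
    (u w : Fin d → ℝ) :
    obsLaw d T lam σ w = (obsLaw d T lam σ u).withDensity
      (fun x => ENNReal.ofReal (Real.exp (∑ t, ∑ i,
        (x t i * (w i - u i) / σ ^ 2 - lam i * (w i ^ 2 - u i ^ 2) / (2 * σ ^ 2))))) := by
  unfold obsLaw
  have h1 : Measure.pi (fun i : Fin d => gaussianReal (lam i * w i) (Real.toNNReal (lam i * σ ^ 2)))
      = (Measure.pi (fun i : Fin d => gaussianReal (lam i * u i) (Real.toNNReal (lam i * σ ^ 2)))).withDensity
        (fun x => ENNReal.ofReal (Real.exp (∑ i,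
        (x i * (w i - u i) / σ ^ 2 - lam i * (w i ^ 2 - u i ^ 2) / (2 * σ ^ 2))))) := by
    have e := fun i => aux_gauss (lam i) σ (hl i) hσ (u i) (w i)
    rw [show (fun i : Fin d => gaussianReal (lam i * w i) (Real.toNNReal (lam i * σ ^ 2))) = _ from
      funext e, aux_pi_withDensity]
    · congr 1
      ext x
      rw [Real.exp_sum, ENNReal.ofReal_prod_of_nonneg (fun _ _ => (Real.exp_pos _).le)]
    · intro i; fun_prop
    · intro i; rw [← e i]; infer_instance
  have h2 := aux_pi_withDensity
    (fun _ : Fin T => Measure.pi (fun i : Fin d => gaussianReal (lam i * u i) (Real.toNNReal (lam i * σ ^ 2))))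
    (fun _ x => ENNReal.ofReal (Real.exp (∑ i,
        (x i * (w i - u i) / σ ^ 2 - lam i * (w i ^ 2 - u i ^ 2) / (2 * σ ^ 2)))))
    (fun _ => by fun_prop) (fun _ => by rw [← h1]; infer_instance)
  rw [← h1] at h2
  rw [h2]
  congr 1
  ext x
  rw [Real.exp_sum, ENNReal.ofReal_prod_of_nonneg (fun _ _ => (Real.exp_pos _).le)]

theorem aux_real (f δ p q : ℝ) (hp : 0 < p) (hq : 0 < q) (h : 1 / 4 ≤ p * q) :
    δ ^ 2 / 2 ≤ p * (f - δ) ^ 2 + q * (f + δ) ^ 2 + (δ ^ 2 / 8 * p + δ ^ 2 / 8 * q) := by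
  wlog hpq : p ≤ q generalizing p q δ
  · have := this (-δ) q p hq hp (by linarith) (by linarith)
    simp only [neg_sq, sub_neg_eq_add, ← sub_eq_add_neg] at this
    linarith
  have h1 : 1 / 2 ≤ 2 * p + (p + q) / 8 := by nlinarith [sq_nonneg (2 * p - q / 8)]
  have h2 : p * (2 * δ ^ 2) ≤ p * (f - δ) ^ 2 + q * (f + δ) ^ 2 := by
    nlinarith [mul_le_mul_of_nonneg_right hpq (sq_nonneg (f + δ)), mul_nonneg hp.le (sq_nonneg f)]
  nlinarith [sq_nonneg δ, mul_le_mul_of_nonneg_left h1 (sq_nonneg δ)]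

theorem aux_two_point (d T : ℕ) (lam : Fin d → ℝ) (σ : ℝ) (hσ : 0 < σ) (hl : ∀ i, 0 < lam i)
    (u : Fin d → ℝ) (i : Fin d) (hu : u i = 0) (δ : ℝ) (hδ : T * (lam i * δ ^ 2) ≤ σ ^ 2)
    {Ω' : Type} [MeasurableSpace Ω'] (ν : Measure Ω') [IsProbabilityMeasure ν]
    (F : (Fin T → Fin d → ℝ) × Ω' → ℝ) (hF : Measurable F) :
    ENNReal.ofReal (δ ^ 2 / 4) ≤
      ∫⁻ p, ENNReal.ofReal ((F p - δ) ^ 2) ∂((obsLaw d T lam σ (Function.update u i δ)).prod ν) +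
      ∫⁻ p, ENNReal.ofReal ((F p + δ) ^ 2) ∂((obsLaw d T lam σ (Function.update u i (-δ))).prod ν) := by
  have key : ∀ ε : ℝ, obsLaw d T lam σ (Function.update u i ε) = (obsLaw d T lam σ u).withDensity
      (fun x => ENNReal.ofReal (Real.exp (∑ t,
        (x t i * ε / σ ^ 2 - lam i * ε ^ 2 / (2 * σ ^ 2))))) := by
    intro ε
    rw [aux_obsLaw d T lam σ hσ hl u]
    congr 1
    ext x
    congr 2
    refine Finset.sum_congr rfl fun t _ => ?_
    rw [Finset.sum_eq_single i]
    · simp [hu]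
    · intro j _ hj
      simp [Function.update_of_ne hj]
    · simp
  set R := (obsLaw d T lam σ u).prod ν with hR
  set D : ℝ → (Fin T → Fin d → ℝ) × Ω' → ℝ := fun ε p => Real.exp (∑ t,
        (p.1 t i * ε / σ ^ 2 - lam i * ε ^ 2 / (2 * σ ^ 2))) with hD
  have hDm : ∀ ε, Measurable (D ε) := by intro ε; simp only [hD]; fun_prop
  have key2 : ∀ ε : ℝ, (obsLaw d T lam σ (Function.update u i ε)).prod ν =
      R.withDensity (fun p => ENNReal.ofReal (D ε p)) := by
    intro ε
    rw [key ε, prod_withDensity_left (by fun_prop)]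
  have hone : ∀ ε : ℝ, ∫⁻ p, ENNReal.ofReal (D ε p) ∂(R) = 1 := by
    intro ε
    have : ((obsLaw d T lam σ (Function.update u i ε)).prod ν) Set.univ = 1 := measure_univ
    rwa [key2 ε, withDensity_apply _ MeasurableSet.univ, Measure.restrict_univ] at this
  have hDpos : ∀ ε p, 0 < D ε p := fun ε p => Real.exp_pos _
  have hprod : ∀ p, 1 / 4 ≤ D δ p * D (-δ) p := by
    intro p
    simp only [hD]
    rw [← Real.exp_add, ← Finset.sum_add_distrib]
    have : ∑ t : Fin T, (p.1 t i * δ / σ ^ 2 - lam i * δ ^ 2 / (2 * σ ^ 2) +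
        (p.1 t i * -δ / σ ^ 2 - lam i * (-δ) ^ 2 / (2 * σ ^ 2))) = - (T * (lam i * δ ^ 2) / σ ^ 2) := by
      rw [Finset.sum_congr rfl (g := fun _ => -((lam i * δ ^ 2) / σ ^ 2))]
      · simp; ring
      · intro t _
        field_simp
        ring
    rw [this]
    have h1 : T * (lam i * δ ^ 2) / σ ^ 2 ≤ 1 := by
      rw [div_le_one (by positivity)]; exact hδ
    have h2 : Real.exp (-1) ≤ Real.exp (-(T * (lam i * δ ^ 2) / σ ^ 2)) :=
      Real.exp_le_exp.2 (by linarith)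
    refine le_trans ?_ h2
    rw [Real.exp_neg, one_div]
    exact inv_anti₀ (Real.exp_pos _) (by linarith [Real.exp_one_lt_d9])
  rw [key2, key2, lintegral_withDensity_eq_lintegral_mul _ (by fun_prop) (by fun_prop),
    lintegral_withDensity_eq_lintegral_mul _ (by fun_prop) (by fun_prop)]
  set I := ∫⁻ p, ((fun p => ENNReal.ofReal (D δ p)) * fun p => ENNReal.ofReal ((F p - δ) ^ 2)) p ∂(R)
    with hI
  set J := ∫⁻ p, ((fun p => ENNReal.ofReal (D (-δ) p)) * fun p => ENNReal.ofReal ((F p + δ) ^ 2)) p ∂(R)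
    with hJ
  have hmain : ENNReal.ofReal (δ ^ 2 / 2) ≤ I + J + ENNReal.ofReal (δ ^ 2 / 4) := by
    have e4 : ENNReal.ofReal (δ ^ 2 / 4) = ∫⁻ p, ENNReal.ofReal (δ ^ 2 / 8) * ENNReal.ofReal (D δ p) ∂(R) +
        ∫⁻ p, ENNReal.ofReal (δ ^ 2 / 8) * ENNReal.ofReal (D (-δ) p) ∂(R) := by
      rw [lintegral_const_mul _ (by fun_prop), lintegral_const_mul _ (by fun_prop), hone, hone,
        mul_one, ← ENNReal.ofReal_add (by positivity) (by positivity)]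
      congr 1; ring
    have e2 : ENNReal.ofReal (δ ^ 2 / 2) = ∫⁻ _p, ENNReal.ofReal (δ ^ 2 / 2) ∂(R) := by simp
    rw [e4, e2, hI, hJ, ← lintegral_add_left (by fun_prop), ← lintegral_add_left (by fun_prop),
      ← lintegral_add_left (by fun_prop)]
    refine lintegral_mono fun p => ?_
    simp only [Pi.mul_apply]
    have a1 := hDpos δ p
    have a2 := hDpos (-δ) p
    rw [← ENNReal.ofReal_mul a1.le, ← ENNReal.ofReal_mul a2.le, ← ENNReal.ofReal_mul (by positivity),
      ← ENNReal.ofReal_mul (by positivity), ← ENNReal.ofReal_add (by positivity) (by positivity),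
      ← ENNReal.ofReal_add (by positivity) (by positivity),
      ← ENNReal.ofReal_add (by positivity) (by positivity)]
    exact ENNReal.ofReal_le_ofReal (aux_real _ _ _ _ a1 a2 (hprod p))
  have e : ENNReal.ofReal (δ ^ 2 / 2) = ENNReal.ofReal (δ ^ 2 / 4) + ENNReal.ofReal (δ ^ 2 / 4) := by
    rw [← ENNReal.ofReal_add (by positivity) (by positivity)]
    congr 1; ring
  rw [e] at hmain
  exact (ENNReal.add_le_add_iff_right ENNReal.ofReal_ne_top).1 hmain

theorem aux_assouad (d T : ℕ) (lam : Fin d → ℝ) (σ : ℝ) (hσ : 0 < σ) (hl : ∀ i, 0 < lam i)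
    (δ : Fin d → ℝ) (hδ : ∀ i, T * (lam i * δ i ^ 2) ≤ σ ^ 2)
    {Ω' : Type} [MeasurableSpace Ω'] (ν : Measure Ω') [IsProbabilityMeasure ν]
    (F : (Fin T → Fin d → ℝ) × Ω' → Fin d → ℝ) (hF : Measurable F) (S : ENNReal)
    (hS : ∀ s : Fin d → Bool, ∫⁻ p, ENNReal.ofReal
        ((1 / 2) * ∑ i : Fin d, lam i * (F p i - (if s i then δ i else - δ i)) ^ 2)
        ∂((obsLaw d T lam σ (fun i => if s i then δ i else - δ i)).prod ν) ≤ S) :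
    ENNReal.ofReal (∑ i, lam i * δ i ^ 2 / 16) ≤ S := by
  set w : (Fin d → Bool) → Fin d → ℝ := fun s i => if s i then δ i else - δ i with hw
  have hFi : ∀ i, Measurable (fun p => F p i) := fun i => (measurable_pi_apply i).comp hF
  set r : Fin d → (Fin d → Bool) → ENNReal := fun i s =>
    ∫⁻ p, ENNReal.ofReal ((F p i - w s i) ^ 2) ∂((obsLaw d T lam σ (w s)).prod ν) with hr
  have hrisk : ∀ s, ∑ i, ENNReal.ofReal (lam i / 2) * r i s ≤ S := by
    intro s
    refine le_of_eq_of_le ?_ (hS s)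
    simp only [hr]
    rw [← show ∑ i, ∫⁻ p, ENNReal.ofReal (lam i / 2) * ENNReal.ofReal ((F p i - w s i) ^ 2)
      ∂((obsLaw d T lam σ (w s)).prod ν) = _ from Finset.sum_congr rfl fun i _ =>
        lintegral_const_mul _ (by fun_prop), ← lintegral_finsetSum _ (fun i _ => by fun_prop)]
    refine lintegral_congr fun p => ?_
    rw [Finset.mul_sum, ENNReal.ofReal_sum_of_nonneg]
    · refine Finset.sum_congr rfl fun i _ => ?_
      rw [← ENNReal.ofReal_mul (by have := hl i; positivity)]
      congr 1
      simp only [hw]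
      ring
    · intro i _
      have := hl i
      positivity
  set fl : Fin d → (Fin d → Bool) → (Fin d → Bool) := fun i s => Function.update s i (!s i) with hfl
  have hinv : ∀ i, Function.Involutive (fl i) := by
    intro i s
    simp [hfl]
  have hpair : ∀ i s, ENNReal.ofReal (δ i ^ 2 / 4) ≤ r i s + r i (fl i s) := by
    intro i s
    have h := aux_two_point d T lam σ hσ hl (Function.update (w s) i 0) i (by simp) (δ i) (hδ i) ν
      (fun p => F p i) (hFi i)
    simp only [Function.update_idem] at h
    have h1 : ∀ b : Bool, w (Function.update s i b) =
        Function.update (w s) i (if b then δ i else - δ i) := by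
      intro b
      ext j
      by_cases hj : j = i
      · subst hj; simp [hw]
      · simp [hw, Function.update_of_ne hj]
    have h2 : ∀ b : Bool, r i (Function.update s i b) = ∫⁻ p, ENNReal.ofReal
        ((F p i - (if b then δ i else - δ i)) ^ 2) ∂((obsLaw d T lam σ
          (Function.update (w s) i (if b then δ i else - δ i))).prod ν) := by
      intro b
      simp only [hr]
      rw [h1 b]
      simp
    have h3 : ENNReal.ofReal (δ i ^ 2 / 4) ≤
        r i (Function.update s i true) + r i (Function.update s i false) := by
      rw [h2, h2]
      simpa using h
    have h4 : r i s = r i (Function.update s i (s i)) := by rw [Function.update_eq_self]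
    rw [h4]
    simp only [hfl]
    cases s i
    · rw [add_comm]; exact h3
    · exact h3
  have hsum : ∀ i, (2 : ENNReal) ^ d * ENNReal.ofReal (δ i ^ 2 / 4) ≤ 2 * ∑ s, r i s := by
    intro i
    have e : ∑ s, r i (fl i s) = ∑ s, r i s := Equiv.sum_comp (hinv i).toPerm (r i)
    calc (2 : ENNReal) ^ d * ENNReal.ofReal (δ i ^ 2 / 4)
        = ∑ _s : Fin d → Bool, ENNReal.ofReal (δ i ^ 2 / 4) := by simp
      _ ≤ ∑ s, (r i s + r i (fl i s)) := Finset.sum_le_sum fun s _ => hpair i s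
      _ = 2 * ∑ s, r i s := by rw [Finset.sum_add_distrib, e, two_mul]
  have hfin : (2 : ENNReal) ^ d * (2 * ENNReal.ofReal (∑ i, lam i * δ i ^ 2 / 16)) ≤
      (2 : ENNReal) ^ d * (2 * S) := by
    calc (2 : ENNReal) ^ d * (2 * ENNReal.ofReal (∑ i, lam i * δ i ^ 2 / 16))
        = ∑ i, ENNReal.ofReal (lam i / 2) * ((2 : ENNReal) ^ d * ENNReal.ofReal (δ i ^ 2 / 4)) := by
          rw [ENNReal.ofReal_sum_of_nonneg (fun i _ => by have := hl i; positivity),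
            Finset.mul_sum, Finset.mul_sum]
          refine Finset.sum_congr rfl fun i _ => ?_
          rw [mul_left_comm (ENNReal.ofReal (lam i / 2)),
            ← ENNReal.ofReal_mul (by have := hl i; positivity),
            show (2 : ENNReal) = ENNReal.ofReal 2 by simp, ← ENNReal.ofReal_mul (by norm_num)]
          congr 2
          ring
      _ ≤ ∑ i, ENNReal.ofReal (lam i / 2) * (2 * ∑ s, r i s) := by
          exact Finset.sum_le_sum fun i _ => mul_le_mul_right (hsum i) _
      _ = 2 * ∑ s, ∑ i, ENNReal.ofReal (lam i / 2) * r i s := by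
          rw [Finset.sum_comm, Finset.mul_sum]
          refine Finset.sum_congr rfl fun i _ => ?_
          rw [← Finset.mul_sum]; ring
      _ ≤ 2 * ∑ _s : Fin d → Bool, S := by
          gcongr with s _
          exact hrisk s
      _ = (2 : ENNReal) ^ d * (2 * S) := by simp; ring
  rw [ENNReal.mul_le_mul_iff_right (by simp) (by simp),
    ENNReal.mul_le_mul_iff_right (by simp) (by simp)] at hfin
  exact hfin

/-- Min-max lower bound under polynomially decaying eigenvalues and the source-condition
thresholds `w̄^{(i)} = i^{(a−b)/2}` (display (4.3) of the paper): the min-max risk is at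
least `c · T^{−1+1/b} σ^{2−2/b}`, with `c` depending only on `c₁` and `b`. -/
theorem minmax_lower_bound_power_law :
    ∀ (bexp c₁ : ℝ), 1 < bexp → 0 < c₁ →
      ∃ c : ℝ, 0 < c ∧
        ∀ (a c₂ : ℝ), 1 < a → 0 < c₂ →
        ∀ (d T : ℕ) (σ : ℝ), 0 < σ → 0 < T →
        ∀ (lam : Fin d → ℝ),
          (∀ i, 0 < lam i) →
          -- eigenvalue decay c₁ i^{−a} ≤ λ_i ≤ c₂ i^{−a}
          (∀ i : Fin d, c₁ * ((i : ℝ) + 1) ^ (-a) ≤ lam i ∧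
            lam i ≤ c₂ * ((i : ℝ) + 1) ^ (-a)) →
          -- d ≥ (c₁ T/σ²)^{1/b} ≥ 1
          (1 : ℝ) ≤ (c₁ * T / σ ^ 2) ^ (1 / bexp) →
          (c₁ * T / σ ^ 2) ^ (1 / bexp) ≤ (d : ℝ) →
          -- any estimator, possibly using an independent source of randomness
          ∀ (Ω' : Type) (_ : MeasurableSpace Ω') (ν : Measure Ω'),
            IsProbabilityMeasure ν →
            ∀ (what : (Fin T → Fin d → ℝ) × Ω' → Fin d → ℝ), Measurable what →
            ENNReal.ofReal
                (c * (T : ℝ) ^ (-1 + 1 / bexp) * σ ^ (2 - 2 / bexp)) ≤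
              ⨆ wstar ∈ {w : Fin d → ℝ |
                  ∀ i : Fin d, |w i| ≤ ((i : ℝ) + 1) ^ ((a - bexp) / 2)},
                ∫⁻ p, ENNReal.ofReal
                    ((1 / 2) * ∑ i : Fin d, lam i * (what p i - wstar i) ^ 2)
                  ∂((obsLaw d T lam σ wstar).prod ν) := by
  intro b c₁ hb hc₁
  refine ⟨c₁ ^ (1 / b) / 32, by positivity, ?_⟩
  intro a c₂ _ _ d T σ hσ hT lam hl hlam hK1 hKd Ω' _ ν _ F hF
  have hT' : (0 : ℝ) < T := by exact_mod_cast hT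
  set K : ℝ := (c₁ * T / σ ^ 2) ^ (1 / b) with hK
  have hKpos : 0 < K := by linarith
  have hKb : K ^ b = c₁ * T / σ ^ 2 := by
    rw [hK, ← Real.rpow_mul (by positivity), one_div_mul_cancel (by positivity), Real.rpow_one]
  set m := ⌊K⌋₊ with hm
  have hm1 : 1 ≤ m := Nat.one_le_floor_iff K |>.2 hK1
  have hmd : m ≤ d := by
    have : (m : ℝ) ≤ d := (Nat.floor_le hKpos.le).trans hKd
    exact_mod_cast this
  have hmK : K / 2 ≤ m := by
    have h1 := Nat.lt_floor_add_one K
    have h2 : (1 : ℝ) ≤ m := by exact_mod_cast hm1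
    linarith
  set δ : Fin d → ℝ := fun i => if (i : ℕ) < m then σ / √(T * lam i) else 0 with hδ
  have hδ2 : ∀ i, lam i * δ i ^ 2 = if (i : ℕ) < m then σ ^ 2 / T else 0 := by
    intro i
    have := hl i
    simp only [hδ]
    split_ifs
    · rw [div_pow, Real.sq_sqrt (by positivity)]
      field_simp
    · simp
  have hδbd : ∀ i : Fin d, |δ i| ≤ ((i : ℝ) + 1) ^ ((a - b) / 2) := by
    intro i
    have hli := hl i
    have hpos : (0 : ℝ) < (i : ℝ) + 1 := by positivity
    apply abs_le_of_sq_le_sq _ (by positivity)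
    rw [← Real.rpow_natCast (((i : ℝ) + 1) ^ ((a - b) / 2)), ← Real.rpow_mul hpos.le]
    rw [show (a - b) / 2 * ((2 : ℕ) : ℝ) = a + -b by push_cast; ring, Real.rpow_add hpos]
    by_cases him : (i : ℕ) < m
    · have h1 := hδ2 i
      rw [if_pos him] at h1
      have h2 : (i : ℝ) + 1 ≤ K := by
        have : ((i : ℝ) + 1) ≤ m := by exact_mod_cast him
        exact this.trans (Nat.floor_le hKpos.le)
      have h3 : ((i : ℝ) + 1) ^ b ≤ c₁ * T / σ ^ 2 := by
        rw [← hKb]; exact Real.rpow_le_rpow hpos.le h2 (by linarith)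
      have h4 := (hlam i).1
      have hB : 0 < ((i : ℝ) + 1) ^ b := by positivity
      have hA : 0 < ((i : ℝ) + 1) ^ a := by positivity
      rw [Real.rpow_neg hpos.le] at h4 ⊢
      have h5 : c₁ ≤ lam i * ((i : ℝ) + 1) ^ a := by
        rwa [← div_eq_mul_inv, div_le_iff₀ hA] at h4
      have h6 : σ ^ 2 / T ≤ c₁ / ((i : ℝ) + 1) ^ b := by
        rw [le_div_iff₀ hB]
        rw [le_div_iff₀ (by positivity)] at h3
        rw [div_mul_eq_mul_div, div_le_iff₀ hT']
        linarith
      have h7 : lam i * δ i ^ 2 ≤ lam i * (((i : ℝ) + 1) ^ a * (((i : ℝ) + 1) ^ b)⁻¹) := by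
        rw [h1, ← mul_assoc, ← div_eq_mul_inv]
        exact h6.trans (by gcongr)
      exact le_of_mul_le_mul_left h7 hli
    · have : δ i = 0 := by simp [hδ, him]
      rw [this, zero_pow two_ne_zero]
      positivity
  have hmain := aux_assouad d T lam σ hσ hl δ (fun i => by
      rw [hδ2 i]
      split_ifs
      · rw [mul_div_cancel₀ _ hT'.ne']
      · simp; positivity) ν F hF
    (⨆ wstar ∈ {w : Fin d → ℝ | ∀ i : Fin d, |w i| ≤ ((i : ℝ) + 1) ^ ((a - b) / 2)},
                ∫⁻ p, ENNReal.ofReal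
                    ((1 / 2) * ∑ i : Fin d, lam i * (F p i - wstar i) ^ 2)
                  ∂((obsLaw d T lam σ wstar).prod ν))
    (fun s => by
      refine le_iSup₂_of_le (fun i => if s i then δ i else - δ i) ?_ le_rfl
      intro i
      have := hδbd i
      dsimp only
      split_ifs
      · exact this
      · rwa [abs_neg])
  refine le_trans (ENNReal.ofReal_le_ofReal ?_) hmain
  have hsum : ∑ i, lam i * δ i ^ 2 / 16 = m * (σ ^ 2 / T / 16) := by
    have : ∀ i : Fin d, lam i * δ i ^ 2 / 16 = (fun n : ℕ => if n < m then σ ^ 2 / T / 16 else 0) i := by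
      intro i
      rw [hδ2 i]
      dsimp only
      split_ifs <;> simp
    rw [Finset.sum_congr rfl (fun i _ => this i),
      Fin.sum_univ_eq_sum_range (fun n : ℕ => if n < m then σ ^ 2 / T / 16 else 0), ← Finset.sum_filter,
      Finset.sum_const, nsmul_eq_mul]
    congr 2
    have : (Finset.range d).filter (fun n => n < m) = Finset.range m := by
      ext n; simp; omega
    rw [this, Finset.card_range]
  rw [hsum]
  have hval : c₁ ^ (1 / b) * (T : ℝ) ^ (-1 + 1 / b) * σ ^ (2 - 2 / b) = K * (σ ^ 2 / T) := by
    rw [hK, Real.div_rpow (by positivity) (by positivity), Real.mul_rpow hc₁.le hT'.le,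
      Real.rpow_add hT', Real.rpow_sub hσ, Real.rpow_neg_one, ← Real.rpow_natCast σ 2,
      ← Real.rpow_mul hσ.le]
    rw [show ((2 : ℕ) : ℝ) * (1 / b) = 2 / b by push_cast; ring]
    push_cast
    field_simp
  calc c₁ ^ (1 / b) / 32 * (T : ℝ) ^ (-1 + 1 / b) * σ ^ (2 - 2 / b)
      = (c₁ ^ (1 / b) * (T : ℝ) ^ (-1 + 1 / b) * σ ^ (2 - 2 / b)) / 32 := by ring
    _ = (K / 2) * (σ ^ 2 / T / 16) := by rw [hval]; ring
    _ ≤ m * (σ ^ 2 / T / 16) := by gcongr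
end
end

section
/- Let T ≥ 16 be such that n = log₂ T and K = T/n are positive integers, set A = 256 (log₂ T)(ln T), let η₀ ≤ 1/λ₁, β ∈ [0, (1 − A/T)²], and let (η_t) be the exponentially decaying step-size schedule. Define the 2d×2d matrices Â_t = [[(1+β)I_d − η_t H, −β I_d],[I_d, 0]] and H̃ = [[H, 0],[0, 0]]. Let (N_t)_{t=0}^{T−1} be any positive semidefinite 2d×2d matrices with N_t ⪯ σ² H̃, and define C₀ = 0, C_t = Â_{t−1} C_{t−1} Â_{t−1}ᵀ + η_{t−1}² N_{t−1} for 1 ≤ t ≤ T. Then there is a universal constant C₂ > 0 such that tr(H̃ C_T) ≤ C₂ σ² ( (λ₁² η₀² + A²) k* / T + η₀² Σ_{j=k*+1}^{d} λ_j² T /(1 − √β)² ), where k* = max{k ∈ {1,…,d} : λ_k η₀ ≥ (1 − √β)/T} (k* = 0 if this set is empty). -/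
open Matrix Finset

noncomputable section

/-- `k* = max{k ∈ {1,…,d} : λ_k η₀ ≥ c}` (with `k* = 0` if the set is empty),
where the eigenvalue `λ_k` is `lam ⟨k-1,_⟩`. -/
def kstarOf (d : ℕ) (lam : Fin d → ℝ) (η₀ c : ℝ) : ℕ :=
  (Finset.univ.filter fun i : Fin d => c ≤ lam i * η₀).sup fun i => (i : ℕ) + 1

/-- Second moments of a planar vector. -/
def Psd3 (a b c : ℝ) : Prop := ∀ y z : ℝ, 0 ≤ y ^ 2 * a + 2 * y * z * b + z ^ 2 * c

/-- Lyapunov form. -/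
def Vf (β x a b c : ℝ) : ℝ := a - (1 + β - x) * b + (1 + β ^ 2) / 2 * c

lemma psd_w {a b c : ℝ} (h : Psd3 a b c) (k : ℝ) :
    0 ≤ (a - 2 * b + c) + 2 * k * (b - c) + k ^ 2 * c := by
  have := h 1 (k - 1); nlinarith

lemma Vf_step {a b c β x δ : ℝ} (h : Psd3 a b c) (hβ : 0 ≤ β) (hβ1 : β < 1) (hx : 0 ≤ x)
    (hx1 : x ≤ 1) (hδ : 0 ≤ δ) (hδ1 : δ ≤ (1 - β) / 12) (hδ2 : δ * (8 * (1 - β)) ≤ x) :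
    -(1 + β - x) * β * b + β ^ 2 * c + (1 + β ^ 2) / 2 * a ≤ (1 - δ) * Vf β x a b c := by
  obtain ⟨g, hg⟩ : ∃ g, g = 1 - β := ⟨_, rfl⟩
  obtain rfl : β = 1 - g := by linarith
  have hg0 : 0 < g := by linarith
  have hg1 : g ≤ 1 := by linarith
  simp only [sub_sub_cancel] at hδ1 hδ2
  obtain ⟨W, hW⟩ : ∃ W, W = a - 2 * b + c := ⟨_, rfl⟩
  obtain ⟨R, hR⟩ : ∃ R, R = b - c := ⟨_, rfl⟩
  have hw : ∀ k : ℝ, 0 ≤ W + 2 * k * R + k ^ 2 * c := by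
    intro k; rw [hW, hR]; exact psd_w h k
  have hP : 0 ≤ c := by have := h 0 1; linarith
  have hW0 : 0 ≤ W := by have := hw 0; linarith
  obtain rfl : b = R + c := by linarith
  obtain rfl : a = W + 2 * R + c := by linarith
  clear hW hR
  have i1 : W / 6 + x * c / 4 ≤ W * (1 - g / 2) + x * c + x * R := by
    have := mul_nonneg hx (hw (3 / 2))
    have := mul_nonneg (sub_nonneg.2 hx1) hW0
    have := mul_nonneg (sub_nonneg.2 hg1) hW0
    linarith
  have i2 : Vf (1 - g) x (W + 2 * R + c) (R + c) c ≤ 2 * W + (g ^ 2 + 3 / 2 * x) * c := by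
    unfold Vf
    have := hw (-g)
    have := mul_nonneg hx (hw (-1))
    have := mul_nonneg (sub_nonneg.2 hx1) hW0
    linarith
  have i3 : δ * Vf (1 - g) x (W + 2 * R + c) (R + c) c ≤ g * (W / 6 + x * c / 4) := by
    have e1 := mul_le_mul_of_nonneg_left i2 hδ
    have e2 : δ * W ≤ g / 12 * W := mul_le_mul_of_nonneg_right hδ1 hW0
    have e3 : (δ * (8 * g)) * (g * c) ≤ x * (g * c) :=
      mul_le_mul_of_nonneg_right hδ2 (by positivity)
    have e4 : δ * (x * c) ≤ g / 12 * (x * c) := mul_le_mul_of_nonneg_right hδ1 (by positivity)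
    linarith
  have i4 := mul_le_mul_of_nonneg_left i1 hg0.le
  have i5 : (1 - δ) * Vf (1 - g) x (W + 2 * R + c) (R + c) c
      - (-(1 + (1 - g) - x) * (1 - g) * (R + c) + (1 - g) ^ 2 * c
          + (1 + (1 - g) ^ 2) / 2 * (W + 2 * R + c))
      = g * (W * (1 - g / 2) + x * c + x * R)
        - δ * Vf (1 - g) x (W + 2 * R + c) (R + c) c := by
    unfold Vf; ring
  linarith

lemma Vf_lower {a b c β x : ℝ} (h : Psd3 a b c) (hβ : 0 ≤ β) (hβ1 : β < 1) (hx : 0 ≤ x)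
    (hx1 : x ≤ 1) :
    a - 2 * b + c ≤ 4 * Vf β x a b c ∧ (1 - β) ^ 2 * c ≤ 6 * Vf β x a b c := by
  obtain ⟨g, hg⟩ : ∃ g, g = 1 - β := ⟨_, rfl⟩
  obtain rfl : β = 1 - g := by linarith
  have hg0 : 0 < g := by linarith
  have hg1 : g ≤ 1 := by linarith
  simp only [sub_sub_cancel]
  obtain ⟨W, hW⟩ : ∃ W, W = a - 2 * b + c := ⟨_, rfl⟩
  obtain ⟨R, hR⟩ : ∃ R, R = b - c := ⟨_, rfl⟩
  have hw : ∀ k : ℝ, 0 ≤ W + 2 * k * R + k ^ 2 * c := by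
    intro k; rw [hW, hR]; exact psd_w h k
  have hP : 0 ≤ c := by have := h 0 1; linarith
  have hW0 : 0 ≤ W := by have := hw 0; linarith
  rw [← hW]
  obtain rfl : b = R + c := by linarith
  obtain rfl : a = W + 2 * R + c := by linarith
  clear hW hR
  have j1 := mul_nonneg hx (hw 2)
  have j2 := mul_nonneg (sub_nonneg.2 hx1) hW0
  unfold Vf
  constructor
  · have := hw g
    linarith
  · have := hw (2 / 3 * g)
    linarith

lemma Vf_nonneg {a b c β x : ℝ} (h : Psd3 a b c) (hβ : 0 ≤ β) (hβ1 : β < 1) (hx : 0 ≤ x)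
    (hx1 : x ≤ 1) : 0 ≤ Vf β x a b c := by
  have := (Vf_lower h hβ hβ1 hx hx1).1
  have h2 := h 1 (-1)
  linarith

lemma Vf_a {a b c β x : ℝ} (h : Psd3 a b c) (hβ : 0 ≤ β) (hβ1 : β < 1) (hx : 0 ≤ x)
    (hx1 : x ≤ 1) : (1 - β) ^ 2 * a ≤ 20 * Vf β x a b c := by
  obtain ⟨h1, h2⟩ := Vf_lower h hβ hβ1 hx hx1
  have hV := Vf_nonneg h hβ hβ1 hx hx1
  have h3 : a ≤ 2 * (a - 2 * b + c) + 2 * c := by have := h 1 (-2); linarith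
  have hg : (1 - β) ^ 2 ≤ 1 := by nlinarith
  have h4 := mul_le_mul_of_nonneg_left h3 (sq_nonneg (1 - β))
  have h5 := mul_le_mul_of_nonneg_left h1 (sq_nonneg (1 - β))
  have h6 := mul_le_mul_of_nonneg_right hg hV
  linarith

lemma Vf_quarter {a b c β x : ℝ} (h : Psd3 a b c) (hβ : 0 ≤ β) (hβ1 : β < 1) (hx : 0 ≤ x)
    (hx1 : x ≤ 1) :
    Real.exp (x / 4) * Vf β (x / 4) a b c ≤ Real.exp x * Vf β x a b c := by
  have h1 := (Vf_lower h hβ hβ1 hx hx1).1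
  have hV := Vf_nonneg h hβ hβ1 hx hx1
  have h2 : Vf β (x / 4) a b c ≤ (1 + 3 / 4 * x) * Vf β x a b c := by
    have := mul_nonneg hx (h 1 1)
    have := mul_le_mul_of_nonneg_left h1 hx
    unfold Vf at *
    linarith
  have h3 : 1 + 3 / 4 * x ≤ Real.exp (3 / 4 * x) := by
    have := Real.add_one_le_exp (3 / 4 * x); linarith
  calc _ ≤ Real.exp (x / 4) * (Real.exp (3 / 4 * x) * Vf β x a b c) := by
        gcongr
        exact h2.trans (mul_le_mul_of_nonneg_right h3 hV)
    _ = _ := by rw [← mul_assoc, ← Real.exp_add]; ring_nf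

lemma rec_bound (ψ : ℕ → ℝ) (r M : ℝ) (hr : 0 ≤ r) (hr1 : r ≤ 1) (hM : 0 ≤ M) (t1 k : ℕ)
    (h : ∀ t, t1 ≤ t → t < t1 + k → ψ (t + 1) ≤ r * ψ t + M) :
    ψ (t1 + k) ≤ r ^ k * ψ t1 + k * M := by
  induction k with
  | zero => simp
  | succ k ih =>
    have i1 := ih (fun t h1 h2 => h t h1 (by omega))
    have i2 := h (t1 + k) (by omega) (by omega)
    have i3 := mul_le_mul_of_nonneg_left i1 hr
    have i4 : r * (k * M) ≤ k * M := mul_le_of_le_one_left (by positivity) hr1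
    push_cast
    rw [← add_assoc, pow_succ]
    linarith

/-- The hypotheses on the scalar second moment recursion. -/
structure Mom (T K : ℕ) (β x₀ S : ℝ) (a b c : ℕ → ℝ) : Prop where
  psd : ∀ t, t ≤ T → Psd3 (a t) (b t) (c t)
  a0 : a 0 = 0
  b0 : b 0 = 0
  c0 : c 0 = 0
  ha : ∀ t, t < T → a (t + 1) ≤ (1 + β - x₀ / 4 ^ (t / K)) ^ 2 * a t
    - 2 * (1 + β - x₀ / 4 ^ (t / K)) * β * b t + β ^ 2 * c t + S * (x₀ / 4 ^ (t / K)) ^ 2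
  hb : ∀ t, t < T → b (t + 1) = (1 + β - x₀ / 4 ^ (t / K)) * a t - β * b t
  hc : ∀ t, t < T → c (t + 1) = a t

lemma x_bd {x₀ : ℝ} (hx : 0 ≤ x₀) (k : ℕ) : 0 ≤ x₀ / 4 ^ k ∧ x₀ / 4 ^ k ≤ x₀ :=
  ⟨by positivity, div_le_self hx (one_le_pow₀ (by norm_num))⟩

/-- The potential. -/
def Phi (K : ℕ) (β x₀ : ℝ) (a b c : ℕ → ℝ) (t : ℕ) : ℝ :=
  Real.exp (x₀ / 4 ^ (t / K)) * Vf β (x₀ / 4 ^ (t / K)) (a t) (b t) (c t)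

lemma Phi_step {T K : ℕ} {β x₀ S : ℝ} {a b c : ℕ → ℝ} (m : Mom T K β x₀ S a b c)
    (hβ : 0 ≤ β) (hβ1 : β < 1) (hx : 0 ≤ x₀) (hx1 : x₀ ≤ 1) (hS : 0 ≤ S)
    (t : ℕ) (ht : t < T) (δ : ℝ) (hδ : 0 ≤ δ) (hδ1 : δ ≤ (1 - β) / 12)
    (hδ2 : δ * (8 * (1 - β)) ≤ x₀ / 4 ^ (t / K)) :
    Phi K β x₀ a b c (t + 1) ≤ (1 - δ) * Phi K β x₀ a b c t
      + 3 * S * (x₀ / 4 ^ (t / K)) ^ 2 := by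
  obtain ⟨y0, y1'⟩ := x_bd hx (t / K)
  have y1 := y1'.trans hx1
  have hp := m.psd t ht.le
  have hp1 := m.psd (t + 1) ht
  have ha := m.ha t ht
  have hb := m.hb t ht
  have hc := m.hc t ht
  have k1 : Phi K β x₀ a b c (t + 1) ≤ Real.exp (x₀ / 4 ^ (t / K)) *
      Vf β (x₀ / 4 ^ (t / K)) (a (t + 1)) (b (t + 1)) (c (t + 1)) := by
    unfold Phi
    rw [Nat.succ_div]
    split_ifs with hd
    · have := Vf_quarter hp1 hβ hβ1 y0 y1
      rw [pow_succ, ← div_div]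
      exact this
    · simp
  refine k1.trans ?_
  unfold Phi
  generalize x₀ / 4 ^ (t / K) = x at *
  have k2 := Vf_step hp hβ hβ1 y0 y1 hδ hδ1 hδ2
  have k3 : Vf β x (a (t + 1)) (b (t + 1)) (c (t + 1)) ≤
      (1 - δ) * Vf β x (a t) (b t) (c t) + S * x ^ 2 := by
    refine le_trans ?_ (add_le_add_left k2 _)
    unfold Vf
    rw [hb, hc]
    linarith
  have k4 := mul_le_mul_of_nonneg_left k3 (Real.exp_pos x).le
  have k5 : Real.exp x ≤ 3 := by
    have := Real.exp_le_exp.2 y1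
    have := Real.exp_one_lt_d9
    linarith
  have k6 : Real.exp x * (S * x ^ 2) ≤ 3 * (S * x ^ 2) :=
    mul_le_mul_of_nonneg_right k5 (by positivity)
  linarith

lemma final_a {T K : ℕ} {β x₀ S : ℝ} {a b c : ℕ → ℝ} (m : Mom T K β x₀ S a b c)
    (hβ : 0 ≤ β) (hβ1 : β < 1) (hx : 0 ≤ x₀) (hx1 : x₀ ≤ 1) :
    (1 - β) ^ 2 * a T ≤ 20 * Phi K β x₀ a b c T := by
  obtain ⟨y0, y1'⟩ := x_bd hx (T / K)
  have y1 := y1'.trans hx1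
  have h1 := Vf_a (m.psd T le_rfl) hβ hβ1 y0 y1
  have h2 := Vf_nonneg (m.psd T le_rfl) hβ hβ1 y0 y1
  have h3 := Real.one_le_exp y0
  unfold Phi
  nlinarith [mul_le_mul_of_nonneg_right h3 h2]

lemma Phi_zero {T K : ℕ} {β x₀ S : ℝ} {a b c : ℕ → ℝ} (m : Mom T K β x₀ S a b c) :
    Phi K β x₀ a b c 0 = 0 := by
  simp [Phi, Vf, m.a0, m.b0, m.c0]

/-- Bound used for the tail directions. -/
lemma tail_bound {T K : ℕ} {β x₀ S : ℝ} {a b c : ℕ → ℝ} (m : Mom T K β x₀ S a b c)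
    (hβ : 0 ≤ β) (hβ1 : β < 1) (hx : 0 ≤ x₀) (hx1 : x₀ ≤ 1) (hS : 0 ≤ S) :
    (1 - β) ^ 2 * a T ≤ 60 * S * x₀ ^ 2 * T := by
  have h1 := rec_bound (Phi K β x₀ a b c) 1 (3 * S * x₀ ^ 2) (by norm_num) le_rfl
    (by positivity) 0 T (by
      intro t _ ht
      obtain ⟨y0, y1⟩ := x_bd hx (t / K)
      have := Phi_step m hβ hβ1 hx hx1 hS t (by omega) 0 le_rfl (by linarith) (by linarith)
      refine this.trans ?_
      rw [sub_zero]
      gcongr)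
  have h2 := final_a m hβ hβ1 hx hx1
  rw [Phi_zero m, zero_add] at h1
  linarith

/-- Bound used for the head directions. -/
lemma head_bound {T n K : ℕ} {β x₀ S q A : ℝ} {a b c : ℕ → ℝ} (m : Mom T K β x₀ S a b c)
    (hβ : 0 ≤ β) (hx : 0 ≤ x₀) (hx1 : x₀ ≤ 1) (hS : 0 ≤ S)
    (hT : T = 2 ^ n) (hTK : T = n * K) (hn : 0 < n) (hK : 0 < K)
    (hA : A = 256 * n * Real.log T) (hA1 : 1 ≤ A) (hq : A / T ≤ q) (hqβ : q ≤ 1 - β)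
    (hqβ2 : 1 - β ≤ 2 * q) :
    (1 - β) ^ 2 * a T ≤ 1100 * S * q ^ 2 * (A ^ 2 / T) := by
  have hT1 : (1 : ℝ) ≤ T := by rw [hT]; push_cast; exact one_le_pow₀ (by norm_num)
  have hT0 : (0 : ℝ) < T := by linarith
  have hA0 : 0 < A := by linarith
  have hq0 : 0 < q := lt_of_lt_of_le (by positivity) hq
  have hβ1 : β < 1 := by linarith
  obtain ⟨κ, hκ⟩ : ∃ κ, κ = q * (A / T) := ⟨_, rfl⟩
  have hκ0 : 0 < κ := by rw [hκ]; positivity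
  have hκlow : (1 / T) ^ 2 ≤ κ := by
    have : 1 / T ≤ A / T := by gcongr
    rw [hκ, sq]
    exact mul_le_mul (this.trans hq) this (by positivity) hq0.le
  -- the final stretch
  have stretch : ∀ t1 k : ℕ, t1 + k = T → x₀ / 4 ^ (t1 / K) ≤ 4 * κ →
      Phi K β x₀ a b c T ≤ Phi K β x₀ a b c t1 + k * (3 * S * (4 * κ) ^ 2) := by
    intro t1 k hk hxk
    have h1 := rec_bound (Phi K β x₀ a b c) 1 (3 * S * (4 * κ) ^ 2) (by norm_num) le_rfl
      (by positivity) t1 k (by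
        intro t ht1 ht
        obtain ⟨y0, y1⟩ := x_bd hx (t / K)
        have := Phi_step m hβ hβ1 hx hx1 hS t (by omega) 0 le_rfl (by linarith) (by linarith)
        refine this.trans ?_
        rw [sub_zero]
        have : x₀ / 4 ^ (t / K) ≤ 4 * κ := by
          refine le_trans ?_ hxk
          have : t1 / K ≤ t / K := Nat.div_le_div_right ht1
          gcongr
          norm_num
        gcongr)
    rw [hk] at h1
    simpa using h1
  have main : Phi K β x₀ a b c T ≤ 3 * S * (1 / T) ^ 3 + T * (3 * S * (4 * κ) ^ 2) := by
    have hex : ∃ L, x₀ / 4 ^ L ≤ 4 * κ := by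
      refine ⟨n, ?_⟩
      have : (4 : ℝ) ^ n = T ^ 2 := by
        rw [hT]; push_cast; rw [← pow_mul, mul_comm, pow_mul]; norm_num
      rw [this]
      calc x₀ / T ^ 2 ≤ 1 / T ^ 2 := by gcongr
        _ = (1 / (T : ℝ)) ^ 2 := by ring
        _ ≤ 4 * κ := by linarith
    classical
    obtain ⟨L, hL, hLmin⟩ : ∃ L, x₀ / 4 ^ L ≤ 4 * κ ∧ ∀ M < L, ¬ (x₀ / 4 ^ M ≤ 4 * κ) :=
      ⟨Nat.find hex, Nat.find_spec hex, fun M hM => Nat.find_min hex hM⟩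
    rcases Nat.eq_zero_or_pos L with h0 | hpos
    · subst h0
      have := stretch 0 T (by omega) (by simpa using hL)
      rw [Phi_zero m] at this
      have : 0 ≤ 3 * S * (1 / (T : ℝ)) ^ 3 := by positivity
      linarith
    · obtain ⟨L, rfl⟩ : ∃ M, L = M + 1 := ⟨L - 1, by omega⟩
      have hprev := hLmin L (by omega)
      push Not at hprev
      have hLn : L + 1 < n := by
        by_contra hcon
        have : n - 1 ≤ L := by omega
        have e1 : x₀ / 4 ^ L ≤ x₀ / 4 ^ (n - 1) := by gcongr; norm_num
        have e2 : (4 : ℝ) ^ (n - 1) * 4 = T ^ 2 := by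
          rw [← pow_succ, Nat.sub_add_cancel hn]
          rw [hT]; push_cast; rw [← pow_mul, mul_comm, pow_mul]; norm_num
        have e3 : x₀ / 4 ^ (n - 1) = 4 * x₀ * (1 / T) ^ 2 := by
          rw [div_pow, ← e2]; field_simp
        have e4 : 4 * x₀ * (1 / (T : ℝ)) ^ 2 ≤ 4 * 1 * (1 / (T : ℝ)) ^ 2 := by gcongr
        linarith
      have hκx : κ ≤ x₀ / 4 ^ (L + 1) := by
        rw [pow_succ, ← div_div]; linarith
      -- start
      have s1 := rec_bound (Phi K β x₀ a b c) 1 (3 * S * x₀ ^ 2) (by norm_num) le_rfl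
        (by positivity) 0 ((L + 1) * K) (by
          intro t _ ht
          obtain ⟨y0, y1⟩ := x_bd hx (t / K)
          have htT : t < T := by
            have : (L + 1) * K ≤ n * K := Nat.mul_le_mul_right _ hLn.le
            omega
          have := Phi_step m hβ hβ1 hx hx1 hS t htT 0 le_rfl (by linarith) (by linarith)
          refine this.trans ?_
          rw [sub_zero]
          gcongr)
      rw [Phi_zero m, zero_add] at s1
      have hLK : (L + 1) * K + K ≤ T := by
        have : (L + 2) * K ≤ n * K := Nat.mul_le_mul_right _ hLn
        rw [hTK]; linarith
      have hLKr : (((L + 1) * K : ℕ) : ℝ) ≤ T := by exact_mod_cast (by omega)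
      have s1' : Phi K β x₀ a b c ((L + 1) * K) ≤ T * (3 * S) := by
        have : (((L + 1) * K : ℕ) : ℝ) * (3 * S * x₀ ^ 2) ≤ T * (3 * S * 1 ^ 2) := by gcongr
        simp only [mul_zero, zero_add] at s1
        linarith
      -- contraction
      obtain ⟨δ, hδ⟩ : ∃ δ, δ = A / (16 * T) := ⟨_, rfl⟩
      have hδ' : δ = (A / T) / 16 := by rw [hδ]; field_simp
      have hδ0 : 0 ≤ δ := by rw [hδ]; positivity
      have hδ1 : δ ≤ (1 - β) / 12 := by
        have : 0 < A / T := by positivity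
        rw [hδ']; linarith
      have s2 := rec_bound (Phi K β x₀ a b c) (1 - δ) (3 * S * (4 * κ) ^ 2) (by linarith)
        (by linarith) (by positivity) ((L + 1) * K) K (by
          intro t ht1 ht
          have htK : t / K = L + 1 := by
            apply Nat.div_eq_of_lt_le ht1
            rw [Nat.succ_mul]; exact ht
          have := Phi_step m hβ hβ1 hx hx1 hS t (by omega) δ hδ0 hδ1 (by
            rw [htK]
            refine le_trans ?_ hκx
            rw [hκ, hδ']
            have : 0 ≤ A / T := by positivity
            nlinarith)
          refine this.trans ?_
          rw [htK]
          have : 0 ≤ x₀ / 4 ^ (L + 1) := by positivity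
          gcongr)
      have hcon : (1 - δ) ^ K ≤ (1 / T) ^ 4 := by
        have e1 : (1 - δ) ^ K ≤ Real.exp (-δ) ^ K := by
          gcongr
          · linarith
          · have := Real.add_one_le_exp (-δ); linarith
        refine e1.trans ?_
        rw [← Real.exp_nat_mul]
        have e2 : (K : ℝ) * -δ = -(16 * Real.log T) := by
          have : (T : ℝ) = n * K := by exact_mod_cast hTK
          have hn0 : (0 : ℝ) < n := by exact_mod_cast hn
          have hK0 : (0 : ℝ) < K := by exact_mod_cast hK
          rw [hδ, hA]
          generalize Real.log T = l
          rw [this]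
          field_simp
          ring
        rw [e2]
        have hlog : 0 ≤ Real.log T := Real.log_nonneg hT1
        have e3 : (1 / (T : ℝ)) ^ 4 = Real.exp (-(4 * Real.log T)) := by
          rw [Real.exp_neg, show (4 : ℝ) * Real.log T = ((4 : ℕ) : ℝ) * Real.log T by norm_num,
            Real.exp_nat_mul, Real.exp_log hT0]
          simp
        rw [e3]
        apply Real.exp_le_exp.2
        linarith
      have hcn : 0 ≤ (1 - δ) ^ K := pow_nonneg (by linarith) _
      have s2' : (1 - δ) ^ K * Phi K β x₀ a b c ((L + 1) * K) ≤ 3 * S * (1 / T) ^ 3 := by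
        calc _ ≤ (1 - δ) ^ K * (T * (3 * S)) := mul_le_mul_of_nonneg_left s1' hcn
          _ ≤ (1 / T) ^ 4 * (T * (3 * S)) := mul_le_mul_of_nonneg_right hcon (by positivity)
          _ = _ := by field_simp
      obtain ⟨k, hk⟩ := Nat.exists_eq_add_of_le hLK
      have s3 := stretch ((L + 1) * K + K) k hk.symm (by
        have : ((L + 1) * K + K) / K = L + 2 := by
          rw [← Nat.succ_mul, Nat.mul_div_cancel _ hK]
        rw [this]
        refine le_trans ?_ hL
        gcongr
        · norm_num
        · omega)
      have hkT : (K : ℝ) + k ≤ T := by exact_mod_cast (by omega : K + k ≤ T)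
      have := mul_le_mul_of_nonneg_right hkT (by positivity : 0 ≤ 3 * S * (4 * κ) ^ 2)
      linarith
  have fin := final_a m hβ hβ1 hx hx1
  have f1 : (T : ℝ) * (3 * S * (4 * κ) ^ 2) = 48 * S * q ^ 2 * (A ^ 2 / T) := by
    rw [hκ]; field_simp; ring
  have f2 : 3 * S * (1 / (T : ℝ)) ^ 3 ≤ 3 * S * q ^ 2 * (A ^ 2 / T) := by
    have g1 : 1 / (T : ℝ) ≤ q := le_trans (by gcongr) hq
    have g2 : 1 / (T : ℝ) ≤ A ^ 2 / T := by
      gcongr; exact one_le_pow₀ hA1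
    calc 3 * S * (1 / (T : ℝ)) ^ 3 = 3 * S * (1 / (T : ℝ)) ^ 2 * (1 / T) := by ring
      _ ≤ 3 * S * q ^ 2 * (A ^ 2 / T) := by gcongr
  have f3 : 0 ≤ S * q ^ 2 * (A ^ 2 / T) := by positivity
  linarith

/-- Crude bound, used when `T` is bounded. -/
lemma crude_bound {T K : ℕ} {β x₀ S B : ℝ} {a b c : ℕ → ℝ} (m : Mom T K β x₀ S a b c)
    (hβ : 0 ≤ β) (hB : β ≤ B) (hx : 0 ≤ x₀) (hx1 : x₀ ≤ 1) (hS : 0 ≤ S) :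
    a T ≤ T * ((1 + B) ^ 2 + B ^ 2 + 2) ^ T * (S * x₀ ^ 2) := by
  have hD : 1 ≤ (1 + B) ^ 2 + B ^ 2 + 2 := by nlinarith [sq_nonneg (1 + B), sq_nonneg B]
  have key : ∀ t, t ≤ T → a t + c t ≤ t * ((1 + B) ^ 2 + B ^ 2 + 2) ^ t * (S * x₀ ^ 2) := by
    intro t
    induction t with
    | zero => intro _; simp [m.a0, m.c0]
    | succ t ih =>
      intro ht
      have ih := ih (by omega)
      have hp := m.psd t (by omega)
      obtain ⟨y0, y1'⟩ := x_bd hx (t / K)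
      have y1 := y1'.trans hx1
      have ha := m.ha t (by omega)
      have hc := m.hc t (by omega)
      have y2 : S * (x₀ / 4 ^ (t / K)) ^ 2 ≤ S * x₀ ^ 2 := by gcongr
      generalize x₀ / 4 ^ (t / K) = x at *
      have ha0 : 0 ≤ a t := by have := hp 1 0; linarith
      have hc0 : 0 ≤ c t := by have := hp 0 1; linarith
      have h1 := hp β (1 + β - x)
      have h2 : (1 + β - x) ^ 2 ≤ (1 + B) ^ 2 + 1 := by nlinarith
      have h3 : β ^ 2 ≤ B ^ 2 := by gcongr
      have h4 : a (t + 1) + c (t + 1) ≤ ((1 + B) ^ 2 + B ^ 2 + 2) * (a t + c t) + S * x₀ ^ 2 := by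
        rw [hc]
        have e1 := mul_le_mul_of_nonneg_right h2 (add_nonneg ha0 hc0)
        have e2 := mul_le_mul_of_nonneg_right h3 (add_nonneg ha0 hc0)
        linarith
      refine h4.trans ?_
      generalize (1 + B) ^ 2 + B ^ 2 + 2 = D at *
      have h5 := mul_le_mul_of_nonneg_left ih (by linarith : 0 ≤ D)
      have h6 : 1 * (S * x₀ ^ 2) ≤ D ^ (t + 1) * (S * x₀ ^ 2) :=
        mul_le_mul_of_nonneg_right (one_le_pow₀ hD) (by positivity)
      push_cast
      rw [pow_succ D t] at *
      linarith
  have hc0 : 0 ≤ c T := by have := m.psd T le_rfl 0 1; linarith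
  linarith [key T le_rfl]

section matpart
variable {d : ℕ}

/-- The block matrix of the heavy ball step. -/
def Ahat (β η : ℝ) (H : Matrix (Fin d) (Fin d) ℝ) :
    Matrix (Fin d ⊕ Fin d) (Fin d ⊕ Fin d) ℝ :=
  Matrix.fromBlocks ((1 + β) • (1 : Matrix (Fin d) (Fin d) ℝ) - η • H)
                ((-β) • (1 : Matrix (Fin d) (Fin d) ℝ)) 1 0

lemma Ahat_e {β η l : ℝ} {H : Matrix (Fin d) (Fin d) ℝ} (hH : H.IsSymm) {v : Fin d → ℝ}
    (hv : H.mulVec v = l • v) :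
    (Ahat β η H)ᵀ *ᵥ (Sum.elim v 0) = (1 + β - l * η) • Sum.elim v 0 + (-β) • Sum.elim (0 : Fin d → ℝ) v := by
  unfold Ahat
  rw [fromBlocks_transpose, fromBlocks_mulVec]
  simp only [transpose_sub, transpose_smul, hH.eq, transpose_one, sub_mulVec, smul_mulVec]
  ext i
  rcases i with i | i
  · have := congrFun hv i
    simp only [Pi.smul_apply, smul_eq_mul] at this
    simp [this]; ring
  · simp

lemma Ahat_f {β η : ℝ} {H : Matrix (Fin d) (Fin d) ℝ} (v : Fin d → ℝ) :
    (Ahat β η H)ᵀ *ᵥ (Sum.elim 0 v) = Sum.elim v 0 := by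
  unfold Ahat
  rw [fromBlocks_transpose, fromBlocks_mulVec]
  ext i
  rcases i with i | i <;> simp

lemma quad_conj {ι : Type*} [Fintype ι] (A C : Matrix ι ι ℝ) (y z : ι → ℝ) :
    y ⬝ᵥ (A * C * Aᵀ) *ᵥ z = (Aᵀ *ᵥ y) ⬝ᵥ C *ᵥ (Aᵀ *ᵥ z) := by
  rw [← mulVec_mulVec, ← mulVec_mulVec, dotProduct_mulVec, ← mulVec_transpose]

lemma quad_symm {ι : Type*} [Fintype ι] {C : Matrix ι ι ℝ} (hC : C.PosSemidef) (y z : ι → ℝ) :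
    y ⬝ᵥ C *ᵥ z = z ⬝ᵥ C *ᵥ y := by
  have h : Cᵀ = C := by
    have := hC.isHermitian.eq
    rwa [conjTranspose_eq_transpose_of_trivial] at this
  rw [dotProduct_mulVec, ← mulVec_transpose, h, dotProduct_comm]

lemma quad_nonneg {ι : Type*} [Fintype ι] {C : Matrix ι ι ℝ} (hC : C.PosSemidef) (y : ι → ℝ) :
    0 ≤ y ⬝ᵥ C *ᵥ y := by
  have := hC.dotProduct_mulVec_nonneg y
  simpa using this

lemma quad_psd3 {ι : Type*} [Fintype ι] {C : Matrix ι ι ℝ} (hC : C.PosSemidef) (e f : ι → ℝ) :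
    Psd3 (e ⬝ᵥ C *ᵥ e) (e ⬝ᵥ C *ᵥ f) (f ⬝ᵥ C *ᵥ f) := by
  intro y z
  have h := quad_nonneg hC (y • e + z • f)
  have hs := quad_symm hC f e
  simp only [mulVec_add, mulVec_smul, dotProduct_add, add_dotProduct, smul_dotProduct,
    dotProduct_smul, smul_eq_mul, hs] at h
  linarith

lemma psd3_zero {a b : ℝ} (h : Psd3 a b 0) : b = 0 := by
  by_contra hb
  have := h 1 (-(a + 1) / (2 * b))
  have e : 2 * 1 * (-(a + 1) / (2 * b)) * b = -(a + 1) := by field_simp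
  rw [e] at this
  linarith

lemma trace_eigen {H : Matrix (Fin d) (Fin d) ℝ} {lam : Fin d → ℝ} {v : Fin d → (Fin d → ℝ)}
    (hv : ∀ i, H.mulVec (v i) = lam i • v i)
    (ho : ∀ i j, v i ⬝ᵥ v j = if i = j then (1 : ℝ) else 0)
    (C : Matrix (Fin d ⊕ Fin d) (Fin d ⊕ Fin d) ℝ) :
    ((Matrix.fromBlocks H 0 0 0 : Matrix (Fin d ⊕ Fin d) (Fin d ⊕ Fin d) ℝ) * C).trace
      = ∑ j, lam j * (Sum.elim (v j) 0 ⬝ᵥ C *ᵥ Sum.elim (v j) 0) := by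
  obtain ⟨P, hP⟩ : ∃ P : Matrix (Fin d) (Fin d) ℝ, P = Matrix.of v := ⟨_, rfl⟩
  have h1 : P * Pᵀ = 1 := by
    ext i j
    rw [hP, mul_apply', one_apply, ← ho i j]
    rfl
  have h2 : Pᵀ * P = 1 := mul_eq_one_comm.1 h1
  have h3 : H * Pᵀ = Pᵀ * diagonal lam := by
    ext i j
    have := congrFun (hv j) i
    rw [mul_diagonal, mul_apply']
    simp only [mulVec, Pi.smul_apply, smul_eq_mul] at this
    rw [hP, transpose_apply, of_apply, mul_comm, ← this]
    rfl
  have h4 : H = Pᵀ * diagonal lam * P := by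
    rw [← h3, Matrix.mul_assoc, h2, Matrix.mul_one]
  rw [← fromBlocks_toBlocks C, fromBlocks_multiply]
  have htr : ∀ X Y : Matrix (Fin d) (Fin d) ℝ,
      (Matrix.fromBlocks X Y 0 0).trace = X.trace := by
    intro X Y
    simp [trace, Fintype.sum_sum_type]
  simp only [Matrix.zero_mul, add_zero, htr]
  rw [h4, Matrix.mul_assoc, Matrix.mul_assoc, trace_mul_comm, Matrix.mul_assoc, trace]
  refine Finset.sum_congr rfl fun j _ => ?_
  rw [diag_apply, diagonal_mul, fromBlocks_mulVec]
  congr 1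
  simp only [mulVec_zero, add_zero, Sum.elim_comp_inl, Sum.elim_comp_inr,
    sumElim_dotProduct_sumElim, zero_dotProduct]
  rw [Matrix.mul_assoc, mul_apply', hP]
  rfl

lemma mom_of {H : Matrix (Fin d) (Fin d) ℝ} {l : ℝ} {v : Fin d → ℝ}
    {σ η₀ β : ℝ} {T K : ℕ} {η : ℕ → ℝ}
    {N Cmat : ℕ → Matrix (Fin d ⊕ Fin d) (Fin d ⊕ Fin d) ℝ}
    (hH : H.IsSymm) (hv : H.mulVec v = l • v) (hvv : v ⬝ᵥ v = 1) (hl : 0 < l)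
    (hη : ∀ t, t < T → η t = η₀ / 4 ^ (t / K))
    (hN : ∀ t, t < T → (N t).PosSemidef)
    (hN2 : ∀ t, t < T →
          (σ ^ 2 • (Matrix.fromBlocks H 0 0 0 : Matrix (Fin d ⊕ Fin d) (Fin d ⊕ Fin d) ℝ)
            - N t).PosSemidef)
    (hC0 : Cmat 0 = 0)
    (hC : ∀ t, Cmat (t + 1) = Ahat β (η t) H * Cmat t * (Ahat β (η t) H)ᵀ + η t ^ 2 • N t) :
    Mom T K β (l * η₀) (σ ^ 2) (fun t => l * (Sum.elim v 0 ⬝ᵥ Cmat t *ᵥ Sum.elim v 0))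
      (fun t => l * (Sum.elim v 0 ⬝ᵥ Cmat t *ᵥ Sum.elim 0 v))
      (fun t => l * (Sum.elim 0 v ⬝ᵥ Cmat t *ᵥ Sum.elim 0 v)) := by
  have hpsd : ∀ t, t ≤ T → (Cmat t).PosSemidef := by
    intro t
    induction t with
    | zero => intro _; rw [hC0]; exact PosSemidef.zero
    | succ t ih =>
      intro ht
      rw [hC]
      refine PosSemidef.add ?_ ((hN t ht).smul (sq_nonneg _))
      have := (ih (by omega)).mul_mul_conjTranspose_same (Ahat β (η t) H)
      rwa [conjTranspose_eq_transpose_of_trivial] at this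
  have hHe : (Sum.elim v 0 : Fin d ⊕ Fin d → ℝ) ⬝ᵥ
      (Matrix.fromBlocks H 0 0 0 : Matrix (Fin d ⊕ Fin d) (Fin d ⊕ Fin d) ℝ) *ᵥ
        Sum.elim v 0 = l := by
    rw [fromBlocks_mulVec]
    simp [hv, hvv, sumElim_dotProduct_sumElim]
  have hHf : (Sum.elim 0 v : Fin d ⊕ Fin d → ℝ) ⬝ᵥ
      (Matrix.fromBlocks H 0 0 0 : Matrix (Fin d ⊕ Fin d) (Fin d ⊕ Fin d) ℝ) *ᵥ
        Sum.elim 0 v = 0 := by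
    rw [fromBlocks_mulVec]
    simp [sumElim_dotProduct_sumElim]
  have hne : ∀ t, t < T → (Sum.elim v 0 : Fin d ⊕ Fin d → ℝ) ⬝ᵥ N t *ᵥ Sum.elim v 0
      ≤ σ ^ 2 * l := by
    intro t ht
    have := quad_nonneg (hN2 t ht) (Sum.elim v 0)
    rw [sub_mulVec, dotProduct_sub, smul_mulVec, dotProduct_smul, hHe, smul_eq_mul] at this
    linarith
  have hnf : ∀ t, t < T → (Sum.elim 0 v : Fin d ⊕ Fin d → ℝ) ⬝ᵥ N t *ᵥ Sum.elim 0 v = 0 := by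
    intro t ht
    have h1 := quad_nonneg (hN2 t ht) (Sum.elim 0 v)
    have h2 := quad_nonneg (hN t ht) (Sum.elim 0 v)
    rw [sub_mulVec, dotProduct_sub, smul_mulVec, dotProduct_smul, hHf, smul_eq_mul] at h1
    linarith
  have hnef : ∀ t, t < T → (Sum.elim v 0 : Fin d ⊕ Fin d → ℝ) ⬝ᵥ N t *ᵥ Sum.elim 0 v = 0 := by
    intro t ht
    have := quad_psd3 (hN t ht) (Sum.elim v 0) (Sum.elim 0 v)
    rw [hnf t ht] at this
    exact psd3_zero this
  refine ⟨?_, by simp [hC0], by simp [hC0], by simp [hC0], ?_, ?_, ?_⟩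
  · intro t ht y z
    have := mul_nonneg hl.le (quad_psd3 (hpsd t ht) (Sum.elim v 0) (Sum.elim 0 v) y z)
    linarith
  · intro t ht
    have hx : l * η₀ / 4 ^ (t / K) = l * η t := by rw [hη t ht]; ring
    have hs := quad_symm (hpsd t ht.le) (Sum.elim 0 v) (Sum.elim v 0)
    simp only [hx]
    rw [hC, add_mulVec, dotProduct_add, quad_conj, Ahat_e hH hv, smul_mulVec, dotProduct_smul]
    simp only [mulVec_add, mulVec_smul, dotProduct_add, add_dotProduct, smul_dotProduct,
      dotProduct_smul, smul_eq_mul, hs]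
    have := mul_le_mul_of_nonneg_left (hne t ht) (by positivity : 0 ≤ l * η t ^ 2)
    linarith
  · intro t ht
    have hx : l * η₀ / 4 ^ (t / K) = l * η t := by rw [hη t ht]; ring
    have hs := quad_symm (hpsd t ht.le) (Sum.elim 0 v) (Sum.elim v 0)
    simp only [hx]
    rw [hC, add_mulVec, dotProduct_add, quad_conj, Ahat_e hH hv, Ahat_f, smul_mulVec,
      dotProduct_smul, hnef t ht]
    simp only [add_dotProduct, smul_dotProduct, smul_eq_mul, hs]
    ring
  · intro t ht
    rw [hC, add_mulVec, dotProduct_add, quad_conj, Ahat_f, smul_mulVec,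
      dotProduct_smul, hnf t ht]
    simp

end matpart

/-- Both scalar bounds, large `T`. -/
lemma scalar_large (T n K : ℕ) (β x₀ S E : ℝ) (a b c : ℕ → ℝ)
    (m : Mom T K β x₀ S a b c) (hβ : 0 ≤ β) (hx : 0 ≤ x₀) (hx1 : x₀ ≤ 1) (hS : 0 ≤ S)
    (hT16 : 16 ≤ T) (hT : T = 2 ^ n) (hTK : T = n * K) (hn : 0 < n) (hK : 0 < K)
    (hβ2 : β ≤ (1 - (256 * n * Real.log T) / T) ^ 2) (hn16 : 16 ≤ n) (hE : 1100 ≤ E) :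
    a T ≤ E * S * ((x₀ ^ 2 + (256 * n * Real.log T) ^ 2) / T) ∧
    (Real.sqrt β < 1 → a T ≤ E * S * (x₀ ^ 2 * T / (1 - Real.sqrt β) ^ 2)) := by
  have hT1 : (16 : ℝ) ≤ T := by exact_mod_cast hT16
  have hT0 : (0 : ℝ) < T := by linarith
  have hs0 := Real.sqrt_nonneg β
  have hsq := Real.sq_sqrt hβ
  obtain ⟨A, hA⟩ : ∃ A, A = 256 * n * Real.log T := ⟨_, rfl⟩
  have hlogT : Real.log T = n * Real.log 2 := by
    rw [hT]; push_cast; rw [Real.log_pow]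
  have hnr : (16 : ℝ) ≤ n := by exact_mod_cast hn16
  have hl2 := Real.log_two_lt_d9
  have hl2' := Real.log_two_gt_d9
  have hAT : A / T < 1 := by
    rw [div_lt_one hT0, hA, hlogT]
    have hpow : ∀ k : ℕ, 16 ≤ k → 256 * k ^ 2 ≤ 2 ^ k := by
      intro k hk
      induction k, hk using Nat.le_induction with
      | base => norm_num
      | succ k hk ih => rw [pow_succ 2 k]; nlinarith
    have h1 := hpow n hn16
    have h2 : (256 : ℝ) * n ^ 2 ≤ T := by rw [hT]; exact_mod_cast h1
    have h3 : (0 : ℝ) < n ^ 2 := by positivity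
    nlinarith
  have hA1 : 1 ≤ A := by
    rw [hA, hlogT]
    have : (16 : ℝ) * (16 * (1 / 2)) ≤ n * (n * Real.log 2) := by
      gcongr
      linarith
    linarith
  have hATp : 0 < A / T := by positivity
  rw [← hA] at hβ2 ⊢
  obtain ⟨q, hq⟩ : ∃ q, q = 1 - Real.sqrt β := ⟨_, rfl⟩
  have hsle : Real.sqrt β ≤ 1 - A / T := by
    rw [Real.sqrt_le_left (by linarith)]; exact hβ2
  have hq1 : A / T ≤ q := by linarith
  have hβq : 1 - β = q * (2 - q) := by rw [hq]; linear_combination hsq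
  have hqle : q ≤ 1 := by linarith
  have hq0 : 0 < q := by linarith
  have hqβ : q ≤ 1 - β := by rw [hβq]; nlinarith
  have hqβ2 : 1 - β ≤ 2 * q := by rw [hβq]; nlinarith
  have hβ1 : β < 1 := by linarith
  have ha0 : 0 ≤ a T := by have := m.psd T le_rfl 1 0; linarith
  have hqq : q ^ 2 * a T ≤ (1 - β) ^ 2 * a T := by gcongr
  rw [← hq]
  have hq2 : 0 < q ^ 2 := by positivity
  constructor
  · have h := hqq.trans (head_bound m hβ hx hx1 hS hT hTK hn hK hA hA1 hq1 hqβ hqβ2)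
    have h' : a T ≤ 1100 * S * (A ^ 2 / T) := by
      refine le_of_mul_le_mul_left ?_ hq2
      linarith
    refine h'.trans ?_
    gcongr
    nlinarith [sq_nonneg x₀]
  · intro _
    have h := hqq.trans (tail_bound m hβ hβ1 hx hx1 hS)
    have h' : a T ≤ 60 * S * (x₀ ^ 2 * T / q ^ 2) := by
      rw [← mul_div_assoc, le_div_iff₀ hq2]
      linarith
    refine h'.trans ?_
    gcongr
    linarith


/-- Both scalar bounds with a universal constant. -/
lemma scalar_bounds : ∃ C₂ : ℝ, 0 < C₂ ∧ ∀ (T n K : ℕ) (β x₀ S : ℝ) (a b c : ℕ → ℝ),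
    Mom T K β x₀ S a b c → 0 ≤ β → 0 ≤ x₀ → x₀ ≤ 1 → 0 ≤ S → 16 ≤ T → T = 2 ^ n → T = n * K →
    0 < n → 0 < K → β ≤ (1 - (256 * n * Real.log T) / T) ^ 2 →
    a T ≤ C₂ * S * ((x₀ ^ 2 + (256 * n * Real.log T) ^ 2) / T) ∧
    (Real.sqrt β < 1 → a T ≤ C₂ * S * (x₀ ^ 2 * T / (1 - Real.sqrt β) ^ 2)) := by
  obtain ⟨B, hB⟩ : ∃ B : ℝ, B = 3841 ^ 2 := ⟨_, rfl⟩
  obtain ⟨D, hD⟩ : ∃ D : ℝ, D = (1 + B) ^ 2 + B ^ 2 + 2 := ⟨_, rfl⟩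
  have hD1 : 1 ≤ D := by rw [hD]; nlinarith [sq_nonneg (1 + B), sq_nonneg B]
  obtain ⟨M, hM⟩ : ∃ M : ℕ, M = 2 ^ 16 := ⟨_, rfl⟩
  have hD0 : 0 < D := by linarith
  refine ⟨1100 + M ^ 2 * D ^ M, by positivity, ?_⟩
  intro T n K β x₀ S a b c m hβ hx hx1 hS hT16 hT hTK hn hK hβ2
  have hT1 : (16 : ℝ) ≤ T := by exact_mod_cast hT16
  have hT0 : (0 : ℝ) < T := by linarith
  have hlog : 0 ≤ Real.log T := Real.log_nonneg (by linarith)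
  have hE : (0 : ℝ) ≤ M ^ 2 * D ^ M := by positivity
  have hs0 := Real.sqrt_nonneg β
  have hsq := Real.sq_sqrt hβ
  rcases lt_or_ge n 16 with hn16 | hn16
  · have hTM : T ≤ M := by
      rw [hT, hM]; exact Nat.pow_le_pow_right (by norm_num) hn16.le
    have hTMr : (T : ℝ) ≤ M := by exact_mod_cast hTM
    have hβB : β ≤ B := by
      refine hβ2.trans ?_
      have h1 : 256 * n * Real.log T / T ≤ 3840 := by
        rw [div_le_iff₀ hT0]
        have h2 : Real.log T ≤ T := (Real.log_le_sub_one_of_pos hT0).trans (by linarith)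
        have h3 : (n : ℝ) ≤ 15 := by exact_mod_cast (by omega : n ≤ 15)
        calc 256 * n * Real.log T ≤ 256 * 15 * T := by gcongr
          _ = _ := by ring
      have h4 : 0 ≤ 256 * n * Real.log T / T := by positivity
      rw [hB]
      generalize 256 * n * Real.log T / T = y at *
      nlinarith
    have h1 := crude_bound m hβ hβB hx hx1 hS
    rw [← hD] at h1
    have h2 : a T ≤ M * D ^ M * (S * x₀ ^ 2) := by
      refine h1.trans ?_
      gcongr
    have hMM : (M : ℝ) * D ^ M * (S * x₀ ^ 2) * T ≤ (1100 + M ^ 2 * D ^ M) * S * x₀ ^ 2 := by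
      have : (M : ℝ) * D ^ M * (S * x₀ ^ 2) * T ≤ M * D ^ M * (S * x₀ ^ 2) * M := by gcongr
      have : 0 ≤ S * x₀ ^ 2 := by positivity
      linarith
    constructor
    · rw [← mul_div_assoc, le_div_iff₀ hT0]
      have e1 := mul_le_mul_of_nonneg_right h2 hT0.le
      have e2 : 0 ≤ (1100 + M ^ 2 * D ^ M) * S * (256 * n * Real.log T) ^ 2 := by positivity
      linarith
    · intro hs1
      have hp : 0 < (1 - Real.sqrt β) ^ 2 := by
        have : 0 < 1 - Real.sqrt β := by linarith
        positivity
      have hp1 : (1 - Real.sqrt β) ^ 2 ≤ 1 := by nlinarith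
      have e3 : x₀ ^ 2 ≤ x₀ ^ 2 * T / (1 - Real.sqrt β) ^ 2 := by
        rw [le_div_iff₀ hp]
        gcongr
        linarith
      have e4 : (M : ℝ) * D ^ M * (S * x₀ ^ 2) ≤ (1100 + M ^ 2 * D ^ M) * S * x₀ ^ 2 := by
        refine le_trans ?_ hMM
        have : 0 ≤ (M : ℝ) * D ^ M * (S * x₀ ^ 2) := by positivity
        nlinarith
      refine h2.trans (e4.trans ?_)
      gcongr
  · exact scalar_large T n K β x₀ S _ a b c m hβ hx hx1 hS hT16 hT hTK hn hK hβ2 hn16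
      (by linarith)

/-- Variance bound (Lemma B.1 of the paper): for the recursion
`C_t = Â_{t−1} C_{t−1} Â_{t−1}ᵀ + η_{t−1}² N_{t−1}` with `0 ⪯ N_t ⪯ σ² H̃`,
`tr(H̃ C_T) ≤ C₂ σ² ((λ₁²η₀² + A²)k*/T + η₀² Σ_{j>k*} λ_j² T/(1−√β)²)`. -/
theorem shb_variance_bound :
    ∃ C₂ : ℝ, 0 < C₂ ∧
      ∀ (d : ℕ) (hd : 0 < d)
        (H : Matrix (Fin d) (Fin d) ℝ) (lam : Fin d → ℝ) (v : Fin d → (Fin d → ℝ))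
        (σ η₀ β : ℝ) (T n K : ℕ) (η : ℕ → ℝ)
        (N Cmat : ℕ → Matrix (Fin d ⊕ Fin d) (Fin d ⊕ Fin d) ℝ),
        -- H symmetric positive definite, orthonormal eigenbasis,
        -- nonincreasing positive eigenvalues
        H.IsSymm →
        (∀ i, H.mulVec (v i) = lam i • v i) →
        (∀ i j, v i ⬝ᵥ v j = if i = j then (1 : ℝ) else 0) →
        (∀ i j : Fin d, i ≤ j → lam j ≤ lam i) →
        (∀ i, 0 < lam i) →
        -- T ≥ 16, n = log₂ T and K = T/n positive integers
        16 ≤ T → T = 2 ^ n → T = n * K → 0 < n → 0 < K →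
        -- step size and momentum constraints, with A = 256 (log₂ T)(ln T)
        0 < η₀ → η₀ ≤ 1 / lam ⟨0, hd⟩ →
        0 ≤ β → β ≤ (1 - (256 * n * Real.log T) / T) ^ 2 →
        -- exponentially decaying step-size schedule
        (∀ t, t < T → η t = η₀ / 4 ^ (t / K)) →
        -- the noise second-moment matrices: 0 ⪯ N_t ⪯ σ² H̃
        (∀ t, t < T → (N t).PosSemidef) →
        (∀ t, t < T →
          (σ ^ 2 • (Matrix.fromBlocks H 0 0 0 : Matrix (Fin d ⊕ Fin d) (Fin d ⊕ Fin d) ℝ)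
            - N t).PosSemidef) →
        -- the variance recursion C₀ = 0, C_{t+1} = Â_t C_t Â_tᵀ + η_t² N_t
        Cmat 0 = 0 →
        (∀ t,
          Cmat (t + 1) =
            (Matrix.fromBlocks ((1 + β) • (1 : Matrix (Fin d) (Fin d) ℝ) - η t • H)
                ((-β) • (1 : Matrix (Fin d) (Fin d) ℝ)) 1 0)
              * Cmat t
              * (Matrix.fromBlocks ((1 + β) • (1 : Matrix (Fin d) (Fin d) ℝ) - η t • H)
                ((-β) • (1 : Matrix (Fin d) (Fin d) ℝ)) 1 0)ᵀ
            + η t ^ 2 • N t) →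
        -- the bound
        ((Matrix.fromBlocks H 0 0 0 : Matrix (Fin d ⊕ Fin d) (Fin d ⊕ Fin d) ℝ)
            * Cmat T).trace ≤
          C₂ * σ ^ 2 *
            (((lam ⟨0, hd⟩) ^ 2 * η₀ ^ 2 + (256 * n * Real.log T) ^ 2)
                * (kstarOf d lam η₀ ((1 - Real.sqrt β) / T) : ℝ) / T
              + η₀ ^ 2 * ∑ j ∈ Finset.univ.filter
                  (fun j : Fin d => kstarOf d lam η₀ ((1 - Real.sqrt β) / T) ≤ (j : ℕ)),
                  (lam j) ^ 2 * T / (1 - Real.sqrt β) ^ 2) := by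
  obtain ⟨C₂, hC₂, hsc⟩ := scalar_bounds
  refine ⟨C₂, hC₂, ?_⟩
  intro d hd H lam v σ η₀ β T n K η N Cmat hH hv ho hmono hpos hT16 hT hTK hn hK hη0 hη1 hβ hβ2
    hη hN hN2 hC0 hC
  rw [trace_eigen hv ho]
  have hl0 : 0 < lam ⟨0, hd⟩ := hpos _
  have hT0 : (0 : ℝ) < T := by
    have : 0 < T := by omega
    exact_mod_cast this
  have hle : ∀ j, lam j ≤ lam ⟨0, hd⟩ := fun j => hmono _ _ (Fin.mk_le_mk.2 (Nat.zero_le _))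
  have hx1 : ∀ j, lam j * η₀ ≤ 1 := by
    intro j
    have h1 : η₀ * lam ⟨0, hd⟩ ≤ 1 := by rwa [le_div_iff₀ hl0] at hη1
    have h2 := mul_le_mul_of_nonneg_right (hle j) hη0.le
    linarith
  have key := fun j : Fin d => hsc T n K β (lam j * η₀) (σ ^ 2) _ _ _
    (mom_of (β := β) hH (hv j) (by simpa using ho j j) (hpos j) hη hN hN2 hC0 hC) hβ
    (mul_nonneg (hpos j).le hη0.le) (hx1 j) (sq_nonneg σ) hT16 hT hTK hn hK hβ2
  obtain ⟨k, hk⟩ : ∃ k, k = kstarOf d lam η₀ ((1 - Real.sqrt β) / T) := ⟨_, rfl⟩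
  rw [← hk]
  obtain ⟨A, hA⟩ : ∃ A, A = 256 * n * Real.log T := ⟨_, rfl⟩
  rw [← hA] at key ⊢
  rw [← Finset.sum_filter_add_sum_filter_not Finset.univ (fun j : Fin d => k ≤ (j : ℕ)), mul_add,
    add_comm]
  apply add_le_add
  · have hcard : (((Finset.univ.filter fun j : Fin d => ¬ k ≤ (j : ℕ)).card : ℕ) : ℝ) ≤ k := by
      have h1 : (Finset.univ.filter fun j : Fin d => ¬ k ≤ (j : ℕ)).card
          ≤ (Finset.range k).card := by
        apply Finset.card_le_card_of_injOn (fun j : Fin d => (j : ℕ))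
        · intro j hj
          simpa using hj
        · intro i _ j _ hij
          exact Fin.ext hij
      rw [Finset.card_range] at h1
      exact_mod_cast h1
    have hb : ∀ j ∈ Finset.univ.filter (fun j : Fin d => ¬ k ≤ (j : ℕ)),
        lam j * (Sum.elim (v j) 0 ⬝ᵥ Cmat T *ᵥ Sum.elim (v j) 0) ≤
          C₂ * σ ^ 2 * (((lam ⟨0, hd⟩) ^ 2 * η₀ ^ 2 + A ^ 2) / T) := by
      intro j _
      refine (key j).1.trans ?_
      rw [mul_pow]
      have h0 := (hpos j).le
      have h1 := hle j
      gcongr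
    refine (Finset.sum_le_card_nsmul _ _ _ hb).trans ?_
    rw [nsmul_eq_mul]
    have h2 := mul_le_mul_of_nonneg_right hcard
      (by positivity : 0 ≤ C₂ * σ ^ 2 * (((lam ⟨0, hd⟩) ^ 2 * η₀ ^ 2 + A ^ 2) / T))
    refine h2.trans (le_of_eq ?_)
    ring
  · rw [Finset.mul_sum, Finset.mul_sum]
    apply Finset.sum_le_sum
    intro j hj
    simp only [Finset.mem_filter, Finset.mem_univ, true_and] at hj
    have hlt : Real.sqrt β < 1 := by
      by_contra hcon
      have h1 : (1 - Real.sqrt β) / T ≤ lam j * η₀ :=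
        (div_nonpos_of_nonpos_of_nonneg (by linarith) hT0.le).trans
          (mul_nonneg (hpos j).le hη0.le)
      have h2 : (j : ℕ) + 1 ≤ k := by
        rw [hk]
        unfold kstarOf
        exact Finset.le_sup (f := fun i : Fin d => (i : ℕ) + 1) (by simpa using h1)
      omega
    refine ((key j).2 hlt).trans (le_of_eq ?_)
    ring
end
end

section
/- Let 0 ≤ β < 1, λ > 0, and 0 < η with ηλ ≤ 1, and let A(η, λ, β) = [[1+β−ηλ, −β],[1, 0]] be the momentum matrix with spectral radius ρ(A). If (1+β−ηλ)² − 4β ≥ 0 (real eigenvalues), then ρ(A) ≤ 1 − ηλ/2 − ηλ/(4(1−√β)). If (1+β−ηλ)² − 4β < 0 (complex eigenvalues), then ρ(A) = √β. In both cases ρ(A) < 1. -/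
open Matrix

noncomputable section

/-- The 2×2 momentum matrix `A(η, λ, β) = [[1+β−ηλ, −β],[1, 0]]`. -/
def momentumMatrix (η lam β : ℝ) : Matrix (Fin 2) (Fin 2) ℝ :=
  !![1 + β - η * lam, -β; 1, 0]

/-- The spectral radius of a real matrix: the maximum modulus of its complex eigenvalues. -/
def specRad {n : ℕ} (M : Matrix (Fin n) (Fin n) ℝ) : ℝ :=
  (spectralRadius ℂ (M.map (algebraMap ℝ ℂ))).toReal

lemma mem_spec_momentum {η lam β : ℝ} {μ : ℂ} :
    μ ∈ spectrum ℂ ((momentumMatrix η lam β).map (algebraMap ℝ ℂ)) ↔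
      μ ^ 2 - ((1 + β - η * lam : ℝ) : ℂ) * μ + (β : ℂ) = 0 := by
  rw [Matrix.mem_spectrum_iff_isRoot_charpoly, Matrix.charpoly_fin_two, Polynomial.IsRoot.def]
  simp [momentumMatrix, Matrix.trace_fin_two, Matrix.det_fin_two]

lemma root_parts {T β : ℝ} {μ : ℂ} (h : μ ^ 2 - (T : ℂ) * μ + (β : ℂ) = 0) :
    μ.re ^ 2 - μ.im ^ 2 - T * μ.re + β = 0 ∧ (2 * μ.re - T) * μ.im = 0 := by
  have h1 := congrArg Complex.re h
  have h2 := congrArg Complex.im h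
  simp [pow_two] at h1 h2
  constructor <;> linarith

lemma specRad_le {n : ℕ} (M : Matrix (Fin n) (Fin n) ℝ) {B : ℝ} (hB : 0 ≤ B)
    (h : ∀ μ ∈ spectrum ℂ (M.map (algebraMap ℝ ℂ)), ‖μ‖ ≤ B) : specRad M ≤ B := by
  unfold specRad
  apply ENNReal.toReal_le_of_le_ofReal hB
  unfold spectralRadius
  refine iSup₂_le fun μ hμ => ?_
  rw [← enorm_eq_nnnorm, ← ofReal_norm]
  exact ENNReal.ofReal_le_ofReal (h μ hμ)

lemma specRad_eq {n : ℕ} [NeZero n] (M : Matrix (Fin n) (Fin n) ℝ) {B : ℝ} (hB : 0 ≤ B)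
    (h : ∀ μ ∈ spectrum ℂ (M.map (algebraMap ℝ ℂ)), ‖μ‖ = B) : specRad M = B := by
  have key : spectralRadius ℂ (M.map (algebraMap ℝ ℂ)) = ENNReal.ofReal B := by
    unfold spectralRadius
    apply le_antisymm
    · refine iSup₂_le fun μ hμ => ?_
      rw [← enorm_eq_nnnorm, ← ofReal_norm, h μ hμ]
    · obtain ⟨μ, hμ⟩ := spectrum.nonempty_of_isAlgClosed_of_finiteDimensional ℂ
        (M.map (algebraMap ℝ ℂ))
      refine le_trans ?_ (le_iSup₂ μ hμ)
      rw [← enorm_eq_nnnorm, ← ofReal_norm, h μ hμ]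
  unfold specRad
  rw [key, ENNReal.toReal_ofReal hB]

lemma real_bound {s x a : ℝ} (hs : 0 ≤ s) (hs1 : s < 1) (hx : 0 < x) (hx1 : x ≤ 1)
    (hd : 0 ≤ (1 + s ^ 2 - x) ^ 2 - 4 * s ^ 2)
    (ha : a ^ 2 - (1 + s ^ 2 - x) * a + s ^ 2 = 0) :
    |a| ≤ 1 - x / 2 - x / (4 * (1 - s)) := by
  have hr : 0 < 1 - s := by linarith
  have hxle : x ≤ (1 - s) ^ 2 := by
    have h1 : (2 * s) ^ 2 ≤ (1 + s ^ 2 - x) ^ 2 := by linarith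
    have h2 := (abs_le_of_sq_le_sq' h1 (by nlinarith)).2
    linarith
  set y := x / (1 - s) with hy
  have hxy : x = y * (1 - s) := (div_mul_cancel₀ x hr.ne').symm
  have hy0 : 0 < y := div_pos hx hr
  have hy1 : y ≤ 1 - s := by
    rw [hy, div_le_iff₀ hr]; linarith
  have e : x / (4 * (1 - s)) = y / 4 := by rw [hy]; field_simp
  rw [e]
  have ha0 : 0 ≤ a := by
    by_contra hneg
    push Not at hneg
    nlinarith [mul_nonneg (by nlinarith : 0 ≤ 1 + s ^ 2 - x) (neg_nonneg.2 hneg.le), sq_pos_of_neg hneg]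
  rw [abs_of_nonneg ha0]
  have hsq : (2 * a - (1 + s ^ 2 - x)) ^ 2 ≤ (1 - s ^ 2 - y / 2) ^ 2 := by
    have h1 : (2 * a - (1 + s ^ 2 - x)) ^ 2 = (1 + s ^ 2 - x) ^ 2 - 4 * s ^ 2 := by
      linarith
    rw [h1]
    have h2 : (1 - s ^ 2 - y / 2) ^ 2 - ((1 + s ^ 2 - x) ^ 2 - 4 * s ^ 2)
        = x * (1 - s + 2 * s ^ 2 - x) + y ^ 2 / 4 := by
      rw [hxy]; ring
    have h3 : 0 ≤ 1 - s + 2 * s ^ 2 - x := by nlinarith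
    nlinarith [mul_nonneg hx.le h3, sq_nonneg y]
  have := (abs_le_of_sq_le_sq' hsq (by nlinarith)).2
  linarith

/-- Spectral radius of the momentum matrix (Lemma B.4 of the paper): in the
real-eigenvalue case `ρ(A) ≤ 1 − ηλ/2 − ηλ/(4(1−√β))`, in the complex-eigenvalue
case `ρ(A) = √β`, and in both cases `ρ(A) < 1`. -/
theorem momentum_matrix_spectral_radius
    (β lam η : ℝ) (hβ₀ : 0 ≤ β) (hβ₁ : β < 1) (hlam : 0 < lam) (hη : 0 < η)
    (hetalam : η * lam ≤ 1) :
    (0 ≤ (1 + β - η * lam) ^ 2 - 4 * β →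
      specRad (momentumMatrix η lam β)
        ≤ 1 - η * lam / 2 - η * lam / (4 * (1 - Real.sqrt β))) ∧
    ((1 + β - η * lam) ^ 2 - 4 * β < 0 →
      specRad (momentumMatrix η lam β) = Real.sqrt β) ∧
    specRad (momentumMatrix η lam β) < 1 := by
  obtain ⟨s, hs, rfl⟩ : ∃ s : ℝ, 0 ≤ s ∧ β = s ^ 2 :=
    ⟨Real.sqrt β, Real.sqrt_nonneg β, (Real.sq_sqrt hβ₀).symm⟩
  rw [Real.sqrt_sq hs]
  have hs1 : s < 1 := by nlinarith
  have hx : 0 < η * lam := mul_pos hη hlam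
  have hreal : 0 ≤ (1 + s ^ 2 - η * lam) ^ 2 - 4 * s ^ 2 →
      specRad (momentumMatrix η lam (s ^ 2))
        ≤ 1 - η * lam / 2 - η * lam / (4 * (1 - s)) := by
    intro hd
    have hb : ∀ μ ∈ spectrum ℂ ((momentumMatrix η lam (s ^ 2)).map (algebraMap ℝ ℂ)),
        ‖μ‖ ≤ 1 - η * lam / 2 - η * lam / (4 * (1 - s)) := by
      intro μ hμ
      obtain ⟨h1, h2⟩ := root_parts (mem_spec_momentum.1 hμ)
      have him : μ.im = 0 := by
        by_contra hne
        have h3 := (mul_eq_zero.1 h2).resolve_right hne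
        have h4 : 0 < μ.im ^ 2 := by positivity
        nlinarith
      have hre : μ = (μ.re : ℂ) := Complex.ext rfl (by simp [him])
      rw [hre, Complex.norm_real, Real.norm_eq_abs]
      apply real_bound hs hs1 hx hetalam hd
      rw [him] at h1
      linarith
    refine specRad_le _ ?_ hb
    obtain ⟨μ, hμ⟩ := spectrum.nonempty_of_isAlgClosed_of_finiteDimensional ℂ
      ((momentumMatrix η lam (s ^ 2)).map (algebraMap ℝ ℂ))
    exact (norm_nonneg μ).trans (hb μ hμ)
  have hcomplex : (1 + s ^ 2 - η * lam) ^ 2 - 4 * s ^ 2 < 0 →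
      specRad (momentumMatrix η lam (s ^ 2)) = s := by
    intro hd
    refine specRad_eq _ hs fun μ hμ => ?_
    obtain ⟨h1, h2⟩ := root_parts (mem_spec_momentum.1 hμ)
    have hne : μ.im ≠ 0 := by
      intro h0
      rw [h0] at h1
      nlinarith [sq_nonneg (2 * μ.re - (1 + s ^ 2 - η * lam))]
    have h3 := (mul_eq_zero.1 h2).resolve_right hne
    have h4 : ‖μ‖ ^ 2 = s ^ 2 := by
      rw [Complex.sq_norm, Complex.normSq_apply]
      have : 1 + s ^ 2 - η * lam = 2 * μ.re := by linarith
      rw [this] at h1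
      linarith
    exact (sq_eq_sq₀ (norm_nonneg _) hs).1 h4
  refine ⟨hreal, hcomplex, ?_⟩
  rcases le_or_gt 0 ((1 + s ^ 2 - η * lam) ^ 2 - 4 * s ^ 2) with hd | hd
  · have h5 : 0 < η * lam / (4 * (1 - s)) := div_pos hx (by linarith)
    linarith [hreal hd]
  · rw [hcomplex hd]; exact hs1
end
end

section
/- Let 0 ≤ β < 1, λ > 0, and 0 < η with ηλ ≤ 1, and let A = A(η, λ, β) = [[1+β−ηλ, −β],[1, 0]] with spectral radius ρ(A) and discriminant Δ² = (1+β−ηλ)² − 4β. Then ‖A‖_F ≤ 3; for every integer k ≥ 2, ‖Aᵏ‖_F ≤ 3k·ρ(A)^{k−2}; and if moreover Δ² ≠ 0, then for every integer k ≥ 2, ‖Aᵏ‖_F ≤ (4/√|Δ²|)·ρ(A)^{k−1}. -/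
open Matrix

noncomputable section

/-- The Frobenius norm of a matrix. -/
def frobNorm {n : ℕ} (M : Matrix (Fin n) (Fin n) ℝ) : ℝ :=
  Real.sqrt (∑ i, ∑ j, (M i j) ^ 2)


/-- The Lucas-type sequence giving the entries of the matrix powers. -/
def lucasU (t b : ℝ) : ℕ → ℝ
  | 0 => 0
  | 1 => 1
  | (n + 2) => t * lucasU t b (n + 1) - b * lucasU t b n

lemma momentum_pow (η lam β : ℝ) (k : ℕ) :
    momentumMatrix η lam β ^ (k + 1) =
      !![lucasU (1 + β - η * lam) β (k + 2), -β * lucasU (1 + β - η * lam) β (k + 1);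
         lucasU (1 + β - η * lam) β (k + 1), -β * lucasU (1 + β - η * lam) β k] := by
  induction k with
  | zero => simp [momentumMatrix, lucasU]
  | succ k ih =>
    rw [pow_succ', ih, momentumMatrix]
    ext i j
    fin_cases i <;> fin_cases j <;>
      simp [Matrix.mul_apply, Fin.sum_univ_two, lucasU] <;> ring

lemma lucasU_step (t b : ℝ) (r s : ℂ) (h1 : r + s = t) (h2 : r * s = b) (k : ℕ) :
    (lucasU t b (k + 1) : ℂ) = r * lucasU t b k + s ^ k := by
  induction k with
  | zero => simp [lucasU]
  | succ k ih =>
    have : lucasU t b (k + 2) = t * lucasU t b (k + 1) - b * lucasU t b k := rfl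
    rw [this]
    push_cast
    rw [← h1, ← h2, pow_succ]
    linear_combination s * ih

lemma lucasU_diff (t b : ℝ) (r s : ℂ) (h1 : r + s = t) (h2 : r * s = b) (k : ℕ) :
    (r - s) * (lucasU t b k : ℂ) = r ^ k - s ^ k := by
  induction k with
  | zero => simp [lucasU]
  | succ k ih =>
    rw [lucasU_step t b r s h1 h2, pow_succ, pow_succ]
    linear_combination r * ih

lemma lucasU_bound (t b ρ : ℝ) (r s : ℂ) (h1 : r + s = t) (h2 : r * s = b)
    (hr : ‖r‖ ≤ ρ) (hs : ‖s‖ ≤ ρ) (k : ℕ) :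
    |lucasU t b (k + 1)| ≤ (k + 1) * ρ ^ k := by
  have hρ : 0 ≤ ρ := (norm_nonneg r).trans hr
  induction k with
  | zero => simp [lucasU]
  | succ k ih =>
    have h := lucasU_step t b r s h1 h2 (k + 1)
    have h3 : |lucasU t b (k + 1 + 1)| = ‖(lucasU t b (k + 1 + 1) : ℂ)‖ := by
      rw [Complex.norm_real, Real.norm_eq_abs]
    rw [h3, h]
    calc _ ≤ ‖r * (lucasU t b (k + 1) : ℂ)‖ + ‖s ^ (k + 1)‖ := norm_add_le _ _
      _ = ‖r‖ * |lucasU t b (k + 1)| + ‖s‖ ^ (k + 1) := by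
        rw [norm_mul, norm_pow, Complex.norm_real, Real.norm_eq_abs]
      _ ≤ ρ * ((k + 1) * ρ ^ k) + ρ ^ (k + 1) := by gcongr
      _ = _ := by push_cast; ring

lemma lucasU_bound_diff (t b ρ : ℝ) (r s : ℂ) (h1 : r + s = t) (h2 : r * s = b)
    (hr : ‖r‖ ≤ ρ) (hs : ‖s‖ ≤ ρ) (k : ℕ) :
    ‖r - s‖ * |lucasU t b k| ≤ 2 * ρ ^ k := by
  have h := lucasU_diff t b r s h1 h2 k
  calc _ = ‖(r - s) * (lucasU t b k : ℂ)‖ := by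
        rw [norm_mul, Complex.norm_real, Real.norm_eq_abs]
    _ = ‖r ^ k - s ^ k‖ := by rw [h]
    _ ≤ ‖r ^ k‖ + ‖s ^ k‖ := norm_sub_le _ _
    _ = ‖r‖ ^ k + ‖s‖ ^ k := by rw [norm_pow, norm_pow]
    _ ≤ ρ ^ k + ρ ^ k := by gcongr
    _ = _ := by ring

lemma root_norm_le_one (t b : ℝ) (hb0 : 0 ≤ b) (hb1 : b < 1) (ht0 : 0 ≤ t) (ht : t < 1 + b)
    (z : ℂ) (hz : z * z - t * z + b = 0) : ‖z‖ ≤ 1 := by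
  have hre := congrArg Complex.re hz
  have him := congrArg Complex.im hz
  simp at hre him
  have key : z.re * z.re + z.im * z.im ≤ 1 := by
    by_cases hy : z.im = 0
    · rw [hy] at hre ⊢
      have h1 : z.re ≤ 1 := by
        by_contra! h
        nlinarith [mul_pos (sub_pos.2 h) (sub_pos.2 (hb1.trans h))]
      have h2 : -1 ≤ z.re := by
        by_contra! h
        nlinarith
      nlinarith
    · have : 2 * z.re - t = 0 := by
        apply mul_left_cancel₀ hy
        linarith
      have ht' : t = 2 * z.re := by linarith
      subst ht'
      nlinarith
  have h2 : ‖z‖ ^ 2 ≤ 1 := by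
    rw [Complex.sq_norm, Complex.normSq_apply]; exact key
  nlinarith [norm_nonneg z]

lemma mem_spec (η lam β : ℝ) (z : ℂ) :
    z ∈ spectrum ℂ ((momentumMatrix η lam β).map (algebraMap ℝ ℂ)) ↔
      z * z - ((1 + β - η * lam : ℝ) : ℂ) * z + (β : ℂ) = 0 := by
  rw [spectrum.mem_iff, Matrix.isUnit_iff_isUnit_det, isUnit_iff_ne_zero, not_not,
    Matrix.det_fin_two]
  simp [momentumMatrix, Matrix.algebraMap_matrix_apply]
  constructor <;> intro h <;> linear_combination h

lemma exists_roots (t b : ℝ) : ∃ r s : ℂ, r + s = t ∧ r * s = b := by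
  obtain ⟨d, hd⟩ := IsAlgClosed.exists_pow_nat_eq ((t : ℂ) ^ 2 - 4 * b) (n := 2) (by norm_num)
  refine ⟨(t + d) / 2, (t - d) / 2, by ring, by linear_combination (-1 / 4) * hd⟩

lemma frob_two (a b c d : ℝ) :
    frobNorm !![a, b; c, d] = Real.sqrt (a ^ 2 + b ^ 2 + (c ^ 2 + d ^ 2)) := by
  simp [frobNorm, Fin.sum_univ_two]

/-- Frobenius-norm bounds for powers of the momentum matrix (Lemma B.5 of the paper):
`‖A‖_F ≤ 3`; for `k ≥ 2`, `‖Aᵏ‖_F ≤ 3k ρ(A)^{k−2}`; and if the discriminant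
`Δ² = (1+β−ηλ)² − 4β` is nonzero, `‖Aᵏ‖_F ≤ (4/√|Δ²|) ρ(A)^{k−1}` for `k ≥ 2`. -/
theorem momentum_matrix_power_frobenius_bounds
    (β lam η : ℝ) (hβ₀ : 0 ≤ β) (hβ₁ : β < 1) (hlam : 0 < lam) (hη : 0 < η)
    (hetalam : η * lam ≤ 1) :
    frobNorm (momentumMatrix η lam β) ≤ 3 ∧
    (∀ k : ℕ, 2 ≤ k →
      frobNorm (momentumMatrix η lam β ^ k)
        ≤ 3 * k * specRad (momentumMatrix η lam β) ^ (k - 2)) ∧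
    ((1 + β - η * lam) ^ 2 - 4 * β ≠ 0 →
      ∀ k : ℕ, 2 ≤ k →
        frobNorm (momentumMatrix η lam β ^ k)
          ≤ 4 / Real.sqrt |(1 + β - η * lam) ^ 2 - 4 * β|
            * specRad (momentumMatrix η lam β) ^ (k - 1)) := by
  set t := 1 + β - η * lam with ht
  have hel : 0 < η * lam := mul_pos hη hlam
  have ht0 : 0 ≤ t := by linarith
  have ht1 : t < 1 + β := by linarith
  obtain ⟨r, s, h1, h2⟩ := exists_roots t β
  set ρ := specRad (momentumMatrix η lam β) with hρdef
  have hle : spectralRadius ℂ ((momentumMatrix η lam β).map (algebraMap ℝ ℂ)) ≤ 1 := by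
    unfold spectralRadius
    refine iSup₂_le fun z hz => ?_
    have := root_norm_le_one t β hβ₀ hβ₁ ht0 ht1 z ((mem_spec η lam β z).1 hz)
    exact_mod_cast this
  have hρ1 : ρ ≤ 1 := by
    have := ENNReal.toReal_mono ENNReal.one_ne_top hle
    exact this.trans_eq (by simp)
  have hroot : ∀ z : ℂ, z * z - (t : ℂ) * z + (β : ℂ) = 0 → ‖z‖ ≤ ρ := by
    intro z hz
    have hz' := (mem_spec η lam β z).2 hz
    have h3 : (‖z‖₊ : ENNReal) ≤
        spectralRadius ℂ ((momentumMatrix η lam β).map (algebraMap ℝ ℂ)) := by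
      unfold spectralRadius
      exact le_iSup₂ (f := fun (k : ℂ)
        (_ : k ∈ spectrum ℂ ((momentumMatrix η lam β).map (algebraMap ℝ ℂ))) =>
          (‖k‖₊ : ENNReal)) z hz'
    have := ENNReal.toReal_mono (ne_top_of_le_ne_top ENNReal.one_ne_top hle) h3
    exact (show ‖z‖ = _ by simp).trans_le this
  have hr : ‖r‖ ≤ ρ := hroot r (by rw [← h1, ← h2]; ring)
  have hs : ‖s‖ ≤ ρ := hroot s (by rw [← h1, ← h2]; ring)
  have hρ0 : 0 ≤ ρ := (norm_nonneg r).trans hr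
  refine ⟨?_, ?_, ?_⟩
  · rw [momentumMatrix, frob_two, ← ht]
    rw [Real.sqrt_le_left (by norm_num)]
    nlinarith
  · intro k hk
    obtain ⟨m, rfl⟩ := Nat.exists_eq_add_of_le' hk
    rw [momentum_pow η lam β (m + 1), frob_two, ← ht]
    have e1 := lucasU_bound t β ρ r s h1 h2 hr hs (m + 2)
    have e2 := lucasU_bound t β ρ r s h1 h2 hr hs (m + 1)
    have e3 := lucasU_bound t β ρ r s h1 h2 hr hs m
    have hP : 0 ≤ ρ ^ m := by positivity
    have p1 : ρ ^ (m + 1) ≤ ρ ^ m := pow_le_pow_of_le_one hρ0 hρ1 (by omega)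
    have p2 : ρ ^ (m + 2) ≤ ρ ^ m := pow_le_pow_of_le_one hρ0 hρ1 (by omega)
    have hm : (0 : ℝ) ≤ m := Nat.cast_nonneg m
    simp only [Nat.add_sub_cancel]
    push_cast at e1 e2 e3 ⊢
    have f1 : |lucasU t β (m + 1 + 2)| ≤ (m + 3) * ρ ^ m := by
      refine e1.trans ?_
      nlinarith
    have f2 : |lucasU t β (m + 1 + 1)| ≤ (m + 2) * ρ ^ m := by
      refine e2.trans ?_
      nlinarith
    have g : ∀ x c : ℝ, |x| ≤ c → x ^ 2 ≤ c ^ 2 := fun x c h => by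
      rw [← sq_abs x]; exact pow_le_pow_left₀ (abs_nonneg x) h 2
    have gb : ∀ x c : ℝ, |x| ≤ c → (-β * x) ^ 2 ≤ c ^ 2 := fun x c h => by
      have := g x c h
      have hb : β ^ 2 ≤ 1 := by nlinarith
      nlinarith [sq_nonneg x]
    rw [Real.sqrt_le_left (by positivity)]
    have q1 := g _ _ f1
    have q2 := g _ _ f2
    have q3 := gb _ _ f2
    have q4 := gb _ _ e3
    refine (add_le_add (add_le_add q1 q3) (add_le_add q2 q4)).trans ?_
    have : 0 ≤ (5 * (m : ℝ) ^ 2 + 20 * m + 18) * (ρ ^ m) ^ 2 := by positivity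
    nlinarith
  · intro hne k hk
    obtain ⟨m, rfl⟩ := Nat.exists_eq_add_of_le' hk
    rw [momentum_pow η lam β (m + 1), frob_two, ← ht]
    have hD2 : |t ^ 2 - 4 * β| = ‖r - s‖ ^ 2 := by
      rw [← norm_pow, ← Real.norm_eq_abs, ← Complex.norm_real]
      congr 1
      push_cast
      rw [← h1, ← h2]; ring
    have hD : Real.sqrt |t ^ 2 - 4 * β| = ‖r - s‖ := by
      rw [hD2, Real.sqrt_sq (norm_nonneg _)]
    have hDpos : 0 < ‖r - s‖ := by
      rw [← hD]; exact Real.sqrt_pos.2 (abs_pos.2 hne)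
    rw [hD]
    have hb : β ≤ ρ := by
      have h5 : ‖r * s‖ = β := by
        rw [h2, Complex.norm_real, Real.norm_eq_abs, abs_of_nonneg hβ₀]
      rw [norm_mul] at h5
      nlinarith [mul_le_mul hr hs (norm_nonneg s) hρ0]
    have e1 := lucasU_bound_diff t β ρ r s h1 h2 hr hs (m + 1 + 2)
    have e2 := lucasU_bound_diff t β ρ r s h1 h2 hr hs (m + 1 + 1)
    have e3 := lucasU_bound_diff t β ρ r s h1 h2 hr hs (m + 1)
    have hm : m + 2 - 1 = m + 1 := by omega
    rw [hm]
    have hP : 0 ≤ ρ ^ (m + 1) := by positivity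
    have p1 : ρ ^ (m + 1 + 2) ≤ ρ ^ (m + 1) := pow_le_pow_of_le_one hρ0 hρ1 (by omega)
    have p2 : ρ ^ (m + 1 + 1) ≤ ρ ^ (m + 1) := pow_le_pow_of_le_one hρ0 hρ1 (by omega)
    set P := ρ ^ (m + 1)
    set D := ‖r - s‖
    have g : ∀ x : ℝ, D * |x| ≤ 2 * P → x ^ 2 ≤ (2 * P / D) ^ 2 := fun x h => by
      rw [← sq_abs x]
      refine pow_le_pow_left₀ (abs_nonneg x) ?_ 2
      rw [le_div_iff₀ hDpos]; linarith
    have gb : ∀ x : ℝ, D * |x| ≤ 2 * P → (-β * x) ^ 2 ≤ (2 * P / D) ^ 2 := fun x h => by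
      have := g x h
      have hb : β ^ 2 ≤ 1 := by nlinarith
      nlinarith [sq_nonneg x]
    rw [Real.sqrt_le_left (by positivity)]
    have q1 := g _ (e1.trans (by linarith))
    have q2 := g _ (e2.trans (by linarith))
    have q3 := gb _ (e2.trans (by linarith))
    have q4 := gb _ e3
    refine (add_le_add (add_le_add q1 q3) (add_le_add q2 q4)).trans (le_of_eq ?_)
    ring
end
end

section
/- Let 0 ≤ β < 1, λ > 0, and let η_{t+1} ≥ η_{t+2} ≥ … ≥ η_{t+k} > 0 be nonincreasing step sizes with η_{t+1}λ ≤ (1−√β)² (so every momentum matrix A(η_s, λ, β) for t+1 ≤ s ≤ t+k has real eigenvalues). Then the product of momentum matrices satisfies ‖A(η_{t+k},λ,β)·A(η_{t+k−1},λ,β)···A(η_{t+1},λ,β)‖ ≤ ‖A(η_{t+k},λ,β)···A(η_{t+1},λ,β)‖_F ≤ ‖(A(η_{t+k},λ,β))ᵏ‖_F, i.e., the Frobenius norm of the product is bounded by the Frobenius norm of the k-th power of the momentum matrix with the smallest step size. -/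
open Matrix

noncomputable section

/-- The operator 2-norm of a real matrix. -/
def l2OpNorm {n : ℕ} (M : Matrix (Fin n) (Fin n) ℝ) : ℝ :=
  ‖Matrix.toEuclideanCLM (𝕜 := ℝ) M‖

/-- Comparison of two matrices: columns (up to sign) and differences stay in the cone
`x ≥ 0, x ≥ r y`, and entries are dominated in absolute value. -/
def MomInv (r : ℝ) (M N : Matrix (Fin 2) (Fin 2) ℝ) : Prop :=
  (0 ≤ M 0 0 ∧ r * M 1 0 ≤ M 0 0) ∧ (0 ≤ -M 0 1 ∧ r * (-M 1 1) ≤ -M 0 1) ∧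
  (0 ≤ N 0 0 - M 0 0 ∧ r * (N 1 0 - M 1 0) ≤ N 0 0 - M 0 0) ∧
  (0 ≤ -(N 0 1 - M 0 1) ∧ r * (-(N 1 1 - M 1 1)) ≤ -(N 0 1 - M 0 1)) ∧
  (M 1 0) ^ 2 ≤ (N 1 0) ^ 2 ∧ (M 1 1) ^ 2 ≤ (N 1 1) ^ 2

theorem cone_step (r a b x y u v : ℝ) (hr : 0 ≤ r) (ha : 2 * r ≤ a) (hab : a ≤ b)
    (hx : 0 ≤ x) (hxy : r * y ≤ x) (hu : 0 ≤ u - x) (huv : r * (v - y) ≤ u - x) :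
    r * x ≤ a * x - r ^ 2 * y ∧
    r * (u - x) ≤ (b * u - r ^ 2 * v) - (a * x - r ^ 2 * y) := by
  constructor
  · nlinarith [mul_le_mul_of_nonneg_left hxy hr, mul_le_mul_of_nonneg_right ha hx]
  · nlinarith [mul_le_mul_of_nonneg_left huv hr, mul_le_mul_of_nonneg_right ha hu,
      mul_le_mul_of_nonneg_right hab hx, mul_le_mul_of_nonneg_right hab hu]

theorem momInv_step (r a b : ℝ) (hr : 0 ≤ r) (ha : 2 * r ≤ a) (hab : a ≤ b)
    (M N : Matrix (Fin 2) (Fin 2) ℝ) (h : MomInv r M N) :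
    MomInv r (!![a, -(r ^ 2); 1, 0] * M) (!![b, -(r ^ 2); 1, 0] * N) := by
  obtain ⟨⟨h1, h2⟩, ⟨h3, h4⟩, ⟨h5, h6⟩, ⟨h7, h8⟩, -, -⟩ := h
  obtain ⟨c1, c2⟩ := cone_step r a b (M 0 0) (M 1 0) (N 0 0) (N 1 0) hr ha hab h1 h2 h5 h6
  obtain ⟨d1, d2⟩ := cone_step r a b (-M 0 1) (-M 1 1) (-N 0 1) (-N 1 1) hr ha hab h3 h4
    (by linarith) (by linarith)
  have e1 := mul_nonneg hr h1
  have e2 := mul_nonneg hr h3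
  have e3 := mul_nonneg hr h5
  have e4 := mul_nonneg hr h7
  simp only [MomInv, Matrix.mul_apply, Fin.sum_univ_two, Matrix.of_apply, Matrix.cons_val', Matrix.cons_val_zero,
    Matrix.cons_val_one, Matrix.cons_val_fin_one]
  refine ⟨⟨by linarith, by linarith⟩, ⟨by linarith, by linarith⟩, ⟨by linarith, by linarith⟩,
    ⟨by linarith, by linarith⟩, by nlinarith, by nlinarith⟩

theorem momInv_list (r b : ℝ) (hr : 0 ≤ r) (L : List (Matrix (Fin 2) (Fin 2) ℝ))
    (hL : ∀ m ∈ L, ∃ a, 2 * r ≤ a ∧ a ≤ b ∧ m = !![a, -(r ^ 2); 1, 0]) :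
    MomInv r L.prod (!![b, -(r ^ 2); 1, 0] ^ L.length) := by
  induction L with
  | nil => simp [MomInv, hr]
  | cons m L ih =>
    obtain ⟨a, h1, h2, rfl⟩ := hL m (by simp)
    rw [List.prod_cons, List.length_cons, pow_succ' (!![b, -(r ^ 2); 1, 0] : Matrix (Fin 2) (Fin 2) ℝ)]
    exact momInv_step r a b hr h1 h2 _ _ (ih fun m hm => hL m (by simp [hm]))

theorem momInv_frob (r : ℝ) (M N : Matrix (Fin 2) (Fin 2) ℝ) (h : MomInv r M N) :
    frobNorm M ≤ frobNorm N := by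
  obtain ⟨⟨h1, h2⟩, ⟨h3, h4⟩, ⟨h5, h6⟩, ⟨h7, h8⟩, h9, h10⟩ := h
  apply Real.sqrt_le_sqrt
  simp only [Fin.sum_univ_two]
  have : M 0 0 ^ 2 ≤ N 0 0 ^ 2 := by nlinarith
  have : M 0 1 ^ 2 ≤ N 0 1 ^ 2 := by nlinarith
  linarith

theorem l2OpNorm_le_frobNorm {n : ℕ} (M : Matrix (Fin n) (Fin n) ℝ) :
    l2OpNorm M ≤ frobNorm M := by
  apply ContinuousLinearMap.opNorm_le_bound _ (Real.sqrt_nonneg _)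
  intro x
  change _ ≤ Real.sqrt (∑ i, ∑ j, (M i j) ^ 2) * _
  rw [EuclideanSpace.norm_eq, EuclideanSpace.norm_eq, ← Real.sqrt_mul (by positivity)]
  apply Real.sqrt_le_sqrt
  rw [Finset.sum_mul]
  apply Finset.sum_le_sum
  intro i _
  simp only [Real.norm_eq_abs, sq_abs]
  have : (Matrix.toEuclideanCLM (𝕜 := ℝ) M x) i = ∑ j, M i j * x j := by
    rfl
  rw [this]
  exact Finset.sum_mul_sq_le_sq_mul_sq _ _ _

/-- Monotonicity bound for products of momentum matrices with nonincreasing step sizes in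
the real-eigenvalue regime (Lemma B.6 of the paper): the product
`A(η_{k-1})⋯A(η_0)` (step sizes `η_0 ≥ … ≥ η_{k-1} > 0`, `η_0 λ ≤ (1−√β)²`) satisfies
`‖·‖ ≤ ‖·‖_F ≤ ‖A(η_{k-1})ᵏ‖_F`. -/
theorem momentum_matrix_product_bound
    (β lam : ℝ) (hβ₀ : 0 ≤ β) (hβ₁ : β < 1) (hlam : 0 < lam)
    (k : ℕ) (hk : 0 < k) (η : Fin k → ℝ)
    (hpos : ∀ i, 0 < η i)
    (hmono : ∀ i j : Fin k, i ≤ j → η j ≤ η i)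
    (hreal : η ⟨0, hk⟩ * lam ≤ (1 - Real.sqrt β) ^ 2) :
    l2OpNorm ((List.ofFn fun i : Fin k => momentumMatrix (η i) lam β).reverse.prod
        : Matrix (Fin 2) (Fin 2) ℝ)
      ≤ frobNorm ((List.ofFn fun i : Fin k => momentumMatrix (η i) lam β).reverse.prod
        : Matrix (Fin 2) (Fin 2) ℝ) ∧
    frobNorm ((List.ofFn fun i : Fin k => momentumMatrix (η i) lam β).reverse.prod
        : Matrix (Fin 2) (Fin 2) ℝ)
      ≤ frobNorm (momentumMatrix (η ⟨k - 1, by omega⟩) lam β ^ k) := by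
  refine ⟨l2OpNorm_le_frobNorm _, ?_⟩
  have hs : Real.sqrt β ^ 2 = β := Real.sq_sqrt hβ₀
  have key := momInv_list (Real.sqrt β) (1 + β - η ⟨k - 1, by omega⟩ * lam) (Real.sqrt_nonneg _)
    (List.ofFn fun i : Fin k => momentumMatrix (η i) lam β).reverse (by
      intro m hm
      rw [List.mem_reverse, List.mem_ofFn] at hm
      obtain ⟨i, rfl⟩ := hm
      refine ⟨1 + β - η i * lam, ?_, ?_, ?_⟩
      · have h0 := mul_le_mul_of_nonneg_right
          (hmono ⟨0, hk⟩ i (Fin.mk_le_of_le_val (Nat.zero_le _))) hlam.le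
        nlinarith
      · have h0 := mul_le_mul_of_nonneg_right
          (hmono i ⟨k - 1, by omega⟩ (by rw [Fin.le_def]; simp only; omega)) hlam.le
        linarith
      · rw [hs]; rfl)
  have h := momInv_frob _ _ _ key
  rw [hs, List.length_reverse, List.length_ofFn] at h
  exact h
end
end

section
/- Let d ≥ 1, let H be a d×d real symmetric positive definite matrix with eigenvalues λ₁ ≥ … ≥ λ_d > 0, let β ∈ [0,1), σ ≥ 0, T ≥ 1, and let η₀ ≥ η₁ ≥ … ≥ η_{T−1} > 0 be arbitrary positive step sizes. Define the 2d×2d matrices Â_t = [[(1+β)I_d − η_t H, −β I_d],[I_d, 0]] and H̃ = [[H, 0],[0, 0]], and let (N_t)_{t=0}^{T−1} be positive semidefinite 2d×2d matrices with N_t ⪯ σ² H̃. Define C₀ = 0 and C_t = Â_{t−1} C_{t−1} Â_{t−1}ᵀ + η_{t−1}² N_{t−1} for 1 ≤ t ≤ T. Then tr(H̃ C_T) ≤ σ² Σ_{j=1}^{d} Σ_{t=0}^{T−1} λ_j² η_t² ‖A_{T−1}^{(j)} A_{T−2}^{(j)} ⋯ A_{t+1}^{(j)}‖², where A_t^{(j)}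 = A(η_t, λ_j, β) is the 2×2 momentum matrix and the empty product (for t = T−1) is the 2×2 identity. -/
open Matrix Finset

noncomputable section

/-- `prodMomentum T η lam β s = A(η_{T−1},λ,β) * ⋯ * A(η_s,λ,β)`
(the identity matrix if `s ≥ T`). -/
def prodMomentum (T : ℕ) (η : ℕ → ℝ) (lam β : ℝ) (s : ℕ) :
    Matrix (Fin 2) (Fin 2) ℝ :=
  ((List.ofFn fun r : Fin T => momentumMatrix (η r) lam β).drop s).reverse.prod

/-- Embedding of a 2-vector along an eigen-direction. -/
def shbLift {d : ℕ} (x : Fin d → ℝ) (w : Fin 2 → ℝ) : Fin d ⊕ Fin d → ℝ :=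
  Sum.elim (w 0 • x) (w 1 • x)

lemma prodMomentum_self (T : ℕ) (η : ℕ → ℝ) (lam β : ℝ) :
    prodMomentum T η lam β T = 1 := by
  unfold prodMomentum
  rw [List.drop_of_length_le (by simp)]
  simp

lemma prodMomentum_succ (T : ℕ) (η : ℕ → ℝ) (lam β : ℝ) (s : ℕ) (hs : s ≤ T) :
    prodMomentum (T + 1) η lam β s =
      momentumMatrix (η T) lam β * prodMomentum T η lam β s := by
  unfold prodMomentum
  rw [List.ofFn_succ', List.concat_eq_append, List.drop_append_of_le_length (by simpa using hs)]
  simp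

lemma entry_sq_le (P : Matrix (Fin 2) (Fin 2) ℝ) : (P 0 0) ^ 2 ≤ l2OpNorm P ^ 2 := by
  unfold l2OpNorm
  rw [sq_le_sq, abs_of_nonneg (norm_nonneg (Matrix.toEuclideanCLM (𝕜 := ℝ) P))]
  have h1 := (Matrix.toEuclideanCLM (𝕜 := ℝ) P).le_opNorm (EuclideanSpace.single 0 1)
  have h2 := PiLp.norm_apply_le
    ((Matrix.toEuclideanCLM (𝕜 := ℝ) P) (EuclideanSpace.single 0 1)) 0
  have h3 : ((Matrix.toEuclideanCLM (𝕜 := ℝ) P) (EuclideanSpace.single 0 1)) 0 = P 0 0 := by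
    rw [Matrix.ofLp_toEuclideanCLM]
    simp
  rw [h3] at h2
  simp only [EuclideanSpace.norm_single, norm_one, mul_one] at h1
  exact h2.trans h1

lemma lift_transpose {d : ℕ} (H : Matrix (Fin d) (Fin d) ℝ) (hsymm : H.IsSymm)
    (x : Fin d → ℝ) (l β e : ℝ) (hx : H.mulVec x = l • x) (w : Fin 2 → ℝ) :
    (Matrix.fromBlocks ((1 + β) • (1 : Matrix (Fin d) (Fin d) ℝ) - e • H)
            ((-β) • (1 : Matrix (Fin d) (Fin d) ℝ)) 1 0)ᵀ *ᵥ shbLift x w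
      = shbLift x ((momentumMatrix e l β)ᵀ *ᵥ w) := by
  unfold shbLift
  rw [Matrix.fromBlocks_transpose, Matrix.fromBlocks_mulVec]
  have hH : Hᵀ = H := hsymm
  funext i
  rcases i with i | i
  · simp [hH, Matrix.sub_mulVec, Matrix.smul_mulVec, Matrix.mulVec_smul, hx, momentumMatrix,
      Matrix.mulVec, dotProduct, Fin.sum_univ_two]
    have := congrFun hx i
    simp [Matrix.mulVec, dotProduct] at this
    try rw [this]
    try ring
  · simp [Matrix.mulVec_smul, momentumMatrix, Matrix.one_apply,
      Matrix.mulVec, dotProduct, Fin.sum_univ_two]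
    try ring

lemma trace_eq {d : ℕ} (H : Matrix (Fin d) (Fin d) ℝ) (hsymm : H.IsSymm)
    (lam : Fin d → ℝ) (v : Fin d → (Fin d → ℝ))
    (heig : ∀ i, H.mulVec (v i) = lam i • v i)
    (horth : ∀ i j, v i ⬝ᵥ v j = if i = j then (1 : ℝ) else 0)
    (C : Matrix (Fin d ⊕ Fin d) (Fin d ⊕ Fin d) ℝ) :
    ((Matrix.fromBlocks H 0 0 0 : Matrix (Fin d ⊕ Fin d) (Fin d ⊕ Fin d) ℝ) * C).trace
      = ∑ j, lam j * (shbLift (v j) ![1, 0] ⬝ᵥ C *ᵥ shbLift (v j) ![1, 0]) := by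
  obtain ⟨A, B, D, E, rfl⟩ : ∃ A B D E, C = Matrix.fromBlocks A B D E :=
    ⟨_, _, _, _, (Matrix.fromBlocks_toBlocks C).symm⟩
  set V : Matrix (Fin d) (Fin d) ℝ := Matrix.of v with hV
  have h1 : V * Vᵀ = 1 := by
    ext i j
    rw [Matrix.one_apply, ← horth]
    rfl
  have h2 : Vᵀ * V = 1 := mul_eq_one_comm.mp h1
  have h3 : V * H = Matrix.diagonal lam * V := by
    ext i j
    rw [Matrix.diagonal_mul]
    have := congrFun (heig i) j
    rw [← hsymm, Matrix.mulVec_transpose] at this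
    exact this
  have h4 : (H * A).trace = (Matrix.diagonal lam * (V * A * Vᵀ)).trace := by
    calc (H * A).trace = (Vᵀ * (V * H * A)).trace := by
          rw [Matrix.mul_assoc V, ← Matrix.mul_assoc Vᵀ, h2, Matrix.one_mul]
      _ = _ := by rw [Matrix.trace_mul_comm, h3]; simp only [Matrix.mul_assoc]
  have h5 : ((Matrix.fromBlocks H 0 0 0 : Matrix (Fin d ⊕ Fin d) (Fin d ⊕ Fin d) ℝ) *
      Matrix.fromBlocks A B D E).trace = (H * A).trace := by
    rw [Matrix.fromBlocks_multiply]
    simp [Matrix.trace, Fintype.sum_sum_type]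
  rw [h5, h4, Matrix.trace]
  refine Finset.sum_congr rfl fun j _ => ?_
  rw [Matrix.diag_apply, Matrix.diagonal_mul]
  congr 1
  unfold shbLift
  rw [Matrix.fromBlocks_mulVec]
  simp [Matrix.mulVec_zero, dotProduct, Fintype.sum_sum_type]
  rw [Matrix.mul_assoc]
  rfl

lemma quad_bound {d : ℕ} (H : Matrix (Fin d) (Fin d) ℝ) (hsymm : H.IsSymm)
    (x : Fin d → ℝ) (l β σ : ℝ) (hx : H.mulVec x = l • x) (hxx : x ⬝ᵥ x = 1)
    (η : ℕ → ℝ) (T : ℕ)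
    (N Cmat : ℕ → Matrix (Fin d ⊕ Fin d) (Fin d ⊕ Fin d) ℝ)
    (hNle : ∀ t, t < T →
      (σ ^ 2 • (Matrix.fromBlocks H 0 0 0 : Matrix (Fin d ⊕ Fin d) (Fin d ⊕ Fin d) ℝ)
        - N t).PosSemidef)
    (hC0 : Cmat 0 = 0)
    (hCrec : ∀ t,
      Cmat (t + 1) =
        (Matrix.fromBlocks ((1 + β) • (1 : Matrix (Fin d) (Fin d) ℝ) - η t • H)
            ((-β) • (1 : Matrix (Fin d) (Fin d) ℝ)) 1 0)
          * Cmat t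
          * (Matrix.fromBlocks ((1 + β) • (1 : Matrix (Fin d) (Fin d) ℝ) - η t • H)
            ((-β) • (1 : Matrix (Fin d) (Fin d) ℝ)) 1 0)ᵀ
        + η t ^ 2 • N t) (t : ℕ) (ht : t ≤ T) (w : Fin 2 → ℝ) :
    shbLift x w ⬝ᵥ Cmat t *ᵥ shbLift x w ≤
      σ ^ 2 * l * ∑ s ∈ Finset.range t,
        η s ^ 2 * (((prodMomentum t η l β (s + 1))ᵀ *ᵥ w) 0) ^ 2 := by
  induction t generalizing w with
  | zero => simp [hC0]
  | succ t ih =>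
    have ih' := ih (by omega) ((momentumMatrix (η t) l β)ᵀ *ᵥ w)
    have hN := (hNle t (by omega)).dotProduct_mulVec_nonneg (shbLift x w)
    have hHq : shbLift x w ⬝ᵥ (Matrix.fromBlocks H 0 0 0 :
        Matrix (Fin d ⊕ Fin d) (Fin d ⊕ Fin d) ℝ) *ᵥ shbLift x w = l * w 0 ^ 2 := by
      unfold shbLift
      rw [Matrix.fromBlocks_mulVec]
      simp only [Sum.elim_comp_inl, Sum.elim_comp_inr, Matrix.zero_mulVec, add_zero,
        Matrix.mulVec_smul, hx, smul_zero, sumElim_dotProduct_sumElim, dotProduct_zero,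
        smul_dotProduct, dotProduct_smul, hxx, smul_eq_mul]
      ring
    rw [star_trivial, Matrix.sub_mulVec, dotProduct_sub, Matrix.smul_mulVec, dotProduct_smul,
      hHq, smul_eq_mul] at hN
    rw [hCrec, Matrix.add_mulVec, dotProduct_add, Matrix.smul_mulVec, dotProduct_smul,
      smul_eq_mul, ← Matrix.mulVec_mulVec, lift_transpose H hsymm x l β (η t) hx w,
      ← Matrix.mulVec_mulVec, Matrix.dotProduct_mulVec, ← Matrix.mulVec_transpose,
      lift_transpose H hsymm x l β (η t) hx w, Finset.sum_range_succ, prodMomentum_self]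
    have hs : ∑ s ∈ Finset.range t,
        η s ^ 2 * (((prodMomentum (t + 1) η l β (s + 1))ᵀ *ᵥ w) 0) ^ 2 =
        ∑ s ∈ Finset.range t, η s ^ 2 * (((prodMomentum t η l β (s + 1))ᵀ *ᵥ
          ((momentumMatrix (η t) l β)ᵀ *ᵥ w)) 0) ^ 2 := by
      refine Finset.sum_congr rfl fun s hs => ?_
      rw [prodMomentum_succ _ _ _ _ _ (by have := Finset.mem_range.mp hs; omega),
        Matrix.transpose_mul, ← Matrix.mulVec_mulVec]
    rw [hs, Matrix.transpose_one, Matrix.one_mulVec]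
    nlinarith [mul_le_mul_of_nonneg_left (sub_nonneg.mp hN) (sq_nonneg (η t))]

/-- Lemma B.10 of the paper: the variance recursion is controlled by operator norms of
products of 2×2 momentum matrices:
`tr(H̃ C_T) ≤ σ² Σ_j Σ_t λ_j² η_t² ‖A_{T−1}^{(j)} ⋯ A_{t+1}^{(j)}‖²`. -/
theorem shb_variance_matrix_product_bound
    (d : ℕ) (hd : 0 < d)
    (H : Matrix (Fin d) (Fin d) ℝ) (lam : Fin d → ℝ) (v : Fin d → (Fin d → ℝ))
    (β σ : ℝ) (hβ₀ : 0 ≤ β) (hβ₁ : β < 1) (hσ : 0 ≤ σ)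
    (T : ℕ) (hT : 1 ≤ T) (η : ℕ → ℝ)
    (hηpos : ∀ t, t < T → 0 < η t)
    (hηmono : ∀ s t, s ≤ t → t < T → η t ≤ η s)
    (N Cmat : ℕ → Matrix (Fin d ⊕ Fin d) (Fin d ⊕ Fin d) ℝ)
    -- H symmetric positive definite, orthonormal eigenbasis,
    -- nonincreasing positive eigenvalues
    (hsymm : H.IsSymm)
    (heig : ∀ i, H.mulVec (v i) = lam i • v i)
    (horth : ∀ i j, v i ⬝ᵥ v j = if i = j then (1 : ℝ) else 0)
    (hmono : ∀ i j : Fin d, i ≤ j → lam j ≤ lam i)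
    (hpos : ∀ i, 0 < lam i)
    -- the noise second-moment matrices: 0 ⪯ N_t ⪯ σ² H̃
    (hNpsd : ∀ t, t < T → (N t).PosSemidef)
    (hNle : ∀ t, t < T →
      (σ ^ 2 • (Matrix.fromBlocks H 0 0 0 : Matrix (Fin d ⊕ Fin d) (Fin d ⊕ Fin d) ℝ)
        - N t).PosSemidef)
    -- the variance recursion C₀ = 0, C_{t+1} = Â_t C_t Â_tᵀ + η_t² N_t
    (hC0 : Cmat 0 = 0)
    (hCrec : ∀ t,
      Cmat (t + 1) =
        (Matrix.fromBlocks ((1 + β) • (1 : Matrix (Fin d) (Fin d) ℝ) - η t • H)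
            ((-β) • (1 : Matrix (Fin d) (Fin d) ℝ)) 1 0)
          * Cmat t
          * (Matrix.fromBlocks ((1 + β) • (1 : Matrix (Fin d) (Fin d) ℝ) - η t • H)
            ((-β) • (1 : Matrix (Fin d) (Fin d) ℝ)) 1 0)ᵀ
        + η t ^ 2 • N t) :
    ((Matrix.fromBlocks H 0 0 0 : Matrix (Fin d ⊕ Fin d) (Fin d ⊕ Fin d) ℝ)
        * Cmat T).trace ≤
      σ ^ 2 * ∑ j : Fin d, ∑ t ∈ Finset.range T,
        (lam j) ^ 2 * (η t) ^ 2 * (l2OpNorm (prodMomentum T η (lam j) β (t + 1))) ^ 2 := by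
  rw [trace_eq H hsymm lam v heig horth, Finset.mul_sum]
  refine Finset.sum_le_sum fun j _ => ?_
  have hq := quad_bound H hsymm (v j) (lam j) β σ (heig j) (by simp [horth]) η T N Cmat
    hNle hC0 hCrec T le_rfl ![1, 0]
  refine (mul_le_mul_of_nonneg_left hq (hpos j).le).trans ?_
  rw [← mul_assoc, Finset.mul_sum, Finset.mul_sum]
  refine Finset.sum_le_sum fun t _ => ?_
  have he : ((prodMomentum T η (lam j) β (t + 1))ᵀ *ᵥ ![1, 0]) 0
      = prodMomentum T η (lam j) β (t + 1) 0 0 := by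
    simp [Matrix.mulVec, dotProduct, Fin.sum_univ_two]
  rw [he]
  have := mul_le_mul_of_nonneg_left (entry_sq_le (prodMomentum T η (lam j) β (t + 1)))
    (by positivity : 0 ≤ σ ^ 2 * lam j ^ 2 * η t ^ 2)
  calc _ = σ ^ 2 * lam j ^ 2 * η t ^ 2 * prodMomentum T η (lam j) β (t + 1) 0 0 ^ 2 := by ring
    _ ≤ _ := this
    _ = _ := by ring
end
end
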